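/- arXiv:1108.2464 — 7 statements merged into one kernel-verified Lean document; each statement's English description precedes it below -/
import Mathlib

section
/- There exists the following Grothendieck-type bound with Krivine's constant: for every m, n ∈ ℕ, every m × n real matrix A = (a_{ij}), every d ∈ ℕ, and all unit vectors x_1, …, x_m, y_1, …, y_n in ℝ^d, one has ∑_{i=1}^m ∑_{j=1}^n a_{ij} ⟨x_i, y_j⟩ ≤ (π / (2 · log(1 + √2))) · max over signs ε_1, …, ε_m, δ_1, …, δ_n ∈ {−1, 1} of ∑_{i=1}^m ∑_{j=1}^n a_{ij} ε_i δ_j. -/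
open Real

section Krivine
open MeasureTheory ProbabilityTheory

lemma kr_schur {ι : Type*} [Fintype ι] {E : Type*} [NormedAddCommGroup E] [InnerProductSpace ℝ E]
    (z : ι → E) (k : ℕ) (v : ι → ℝ) :
    0 ≤ ∑ p, ∑ q, v p * v q * (inner ℝ (z p) (z q) : ℝ) ^ k := by
  classical
  have hG : (Matrix.gram ℝ z).PosSemidef := Matrix.posSemidef_gram ℝ z
  have key : ∀ k : ℕ, (Matrix.of fun p q => (inner ℝ (z p) (z q) : ℝ) ^ k).PosSemidef := by
    intro k
    induction k with
    | zero =>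
      have := Matrix.posSemidef_vecMulVec_self_star (fun _ : ι => (1 : ℝ))
      convert this using 1
      ext p q
      simp [Matrix.vecMulVec]
    | succ k ih =>
      have h := ih.hadamard hG
      have e : (Matrix.of fun p q => (inner ℝ (z p) (z q) : ℝ) ^ (k + 1)) =
          Matrix.hadamard (Matrix.of fun p q => (inner ℝ (z p) (z q) : ℝ) ^ k)
            (Matrix.gram ℝ z) := by
        ext p q
        simp [Matrix.hadamard, Matrix.gram, pow_succ]
      rw [e]
      exact h
  have := (key k).dotProduct_mulVec_nonneg v
  simp only [dotProduct, Matrix.mulVec, Matrix.of_apply, Finset.mul_sum, Pi.star_apply,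
    star_trivial] at this
  refine this.trans_eq ?_
  refine Finset.sum_congr rfl fun p _ => Finset.sum_congr rfl fun q _ => ?_
  ring

lemma kr_gram {ι : Type*} [Fintype ι] (M : Matrix ι ι ℝ) (hM : M.PosSemidef) :
    ∃ u : ι → EuclideanSpace ℝ ι, ∀ p q, (inner ℝ (u p) (u q) : ℝ) = M p q := by
  classical
  open scoped MatrixOrder in
  obtain ⟨B, hB⟩ := CStarAlgebra.nonneg_iff_eq_star_mul_self.mp hM.nonneg
  refine ⟨fun p => WithLp.toLp 2 fun k => B k p, fun p q => ?_⟩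
  rw [hB]
  simp [Matrix.mul_apply, PiLp.inner_apply, mul_comm]

lemma kr_vectors {α β : Type*} [Fintype α] [Fintype β] {E : Type*} [NormedAddCommGroup E]
    [InnerProductSpace ℝ E] (x : α → E) (y : β → E) (hx : ∀ i, ‖x i‖ = 1) (hy : ∀ j, ‖y j‖ = 1)
    (c : ℝ) (hc0 : 0 ≤ c) (hc : sinh c = 1) :
    ∃ (u : α → EuclideanSpace ℝ (α ⊕ β)) (v : β → EuclideanSpace ℝ (α ⊕ β)),
      (∀ i, ‖u i‖ = 1) ∧ (∀ j, ‖v j‖ = 1) ∧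
      ∀ i j, (inner ℝ (u i) (v j) : ℝ) = sin (c * inner ℝ (x i) (y j)) := by
  let z : α ⊕ β → E := Sum.elim x y
  let s : ℕ → α ⊕ β → ℝ := fun k => Sum.elim (fun _ => 1) (fun _ => (-1) ^ k)
  let M : Matrix (α ⊕ β) (α ⊕ β) ℝ := Matrix.of fun p q => match p, q with
    | .inl i, .inl j => sinh (c * inner ℝ (x i) (x j))
    | .inl i, .inr j => sin (c * inner ℝ (x i) (y j))
    | .inr i, .inl j => sin (c * inner ℝ (y i) (x j))
    | .inr i, .inr j => sinh (c * inner ℝ (y i) (y j))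
  have hs : ∀ p q, HasSum (fun k => s k p * s k q * ((c * inner ℝ (z p) (z q)) ^ (2 * k + 1) /
      ((2 * k + 1).factorial : ℝ))) (M p q) := by
    have h1 : ∀ k : ℕ, ((-1 : ℝ) ^ k) * (-1) ^ k = 1 := fun k => by
      rw [← mul_pow]; simp
    rintro (i | i) (j | j)
    · simpa [s, z, M] using Real.hasSum_sinh (c * inner ℝ (x i) (x j))
    · simpa [s, z, M, mul_div_assoc] using Real.hasSum_sin (c * inner ℝ (x i) (y j))
    · simpa [s, z, M, mul_div_assoc] using Real.hasSum_sin (c * inner ℝ (y i) (x j))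
    · simpa [s, z, M, h1] using Real.hasSum_sinh (c * inner ℝ (y i) (y j))
  have hM : M.PosSemidef := by
    refine Matrix.PosSemidef.of_dotProduct_mulVec_nonneg ?_ ?_
    · ext p q
      rcases p with i | i <;> rcases q with j | j <;>
        simp [M, real_inner_comm]
    · intro w
      have hq : HasSum (fun k => ∑ p, ∑ q, w p * (w q * (s k p * s k q *
          ((c * inner ℝ (z p) (z q)) ^ (2 * k + 1) / ((2 * k + 1).factorial : ℝ)))))
          (∑ p, ∑ q, w p * (w q * M p q)) :=
        hasSum_sum fun p _ => hasSum_sum fun q _ => ((hs p q).mul_left _).mul_left _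
      have : star w ⬝ᵥ (M.mulVec w) = ∑ p, ∑ q, w p * (w q * M p q) := by
        simp only [dotProduct, Matrix.mulVec, Finset.mul_sum, Pi.star_apply, star_trivial]
        refine Finset.sum_congr rfl fun p _ => Finset.sum_congr rfl fun q _ => ?_
        ring
      rw [this]
      refine hq.nonneg fun k => ?_
      have := kr_schur z (2 * k + 1) (fun p => w p * s k p)
      have h2 : 0 ≤ c ^ (2 * k + 1) / ((2 * k + 1).factorial : ℝ) := by positivity
      refine (mul_nonneg h2 this).trans_eq ?_
      rw [Finset.mul_sum]
      refine Finset.sum_congr rfl fun p _ => ?_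
      rw [Finset.mul_sum]
      refine Finset.sum_congr rfl fun q _ => ?_
      rw [mul_pow]
      ring
  obtain ⟨u, hu⟩ := kr_gram M hM
  refine ⟨fun i => u (.inl i), fun j => u (.inr j), fun i => ?_, fun j => ?_, fun i j => hu _ _⟩
  · have := hu (.inl i) (.inl i)
    rw [real_inner_self_eq_norm_sq] at this
    simp only [M, Matrix.of_apply, real_inner_self_eq_norm_sq, hx, one_pow, mul_one, hc] at this
    nlinarith [norm_nonneg (u (.inl i))]
  · have := hu (.inr j) (.inr j)
    rw [real_inner_self_eq_norm_sq] at this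
    simp only [M, Matrix.of_apply, real_inner_self_eq_norm_sq, hy, one_pow, mul_one, hc] at this
    nlinarith [norm_nonneg (u (.inr j))]


/-- sign with value one at zero -/
noncomputable def krSg (t : ℝ) : ℝ := if 0 ≤ t then 1 else -1

lemma krSg_measurable : Measurable krSg :=
  Measurable.ite measurableSet_Ici measurable_const measurable_const

lemma krSg_pos {t : ℝ} (h : 0 ≤ t) : krSg t = 1 := if_pos h
lemma krSg_neg {t : ℝ} (h : t < 0) : krSg t = -1 := if_neg (not_le.2 h)
lemma krSg_or (t : ℝ) : krSg t = 1 ∨ krSg t = -1 := by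
  unfold krSg; split_ifs <;> simp
lemma krSg_abs (t : ℝ) : |krSg t| = 1 := by
  rcases krSg_or t with h | h <;> simp [h]
lemma krSg_mul {r : ℝ} (hr : 0 < r) (t : ℝ) : krSg (r * t) = krSg t := by
  unfold krSg; simp [hr]

section
variable {E : Type*} [NormedAddCommGroup E] [InnerProductSpace ℝ E] [FiniteDimensional ℝ E]
  [MeasurableSpace E] [BorelSpace E]

lemma kr_charFun (u v : E) (t : ℂ) :
    charFun ((stdGaussian E).map fun g => (⟨inner ℝ u g, inner ℝ v g⟩ : ℂ)) t =
      Complex.exp (- ((t.re ^ 2 * ‖u‖ ^ 2 + 2 * (t.re * t.im * inner ℝ u v) + t.im ^ 2 * ‖v‖ ^ 2 : ℝ) : ℂ) / 2) := by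
  have hm : Measurable fun g : E => (⟨inner ℝ u g, inner ℝ v g⟩ : ℂ) := by
    have : (fun g : E => (⟨inner ℝ u g, inner ℝ v g⟩ : ℂ)) =
      fun g => ((inner ℝ u g : ℝ) : ℂ) + ((inner ℝ v g : ℝ) : ℂ) * Complex.I := by
      ext g; apply Complex.ext <;> simp
    rw [this]; fun_prop
  have h := charFun_stdGaussian (t.re • u + t.im • v)
  have hn : ‖t.re • u + t.im • v‖ ^ 2 =
      t.re ^ 2 * ‖u‖ ^ 2 + 2 * (t.re * t.im * inner ℝ u v) + t.im ^ 2 * ‖v‖ ^ 2 := by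
    rw [norm_add_sq_real, norm_smul, norm_smul, mul_pow, mul_pow, inner_smul_left, inner_smul_right]
    simp
    ring
  rw [← hn]
  rw [Complex.ofReal_pow, ← h, charFun_apply, charFun_apply,
    integral_map hm.aemeasurable (Measurable.aestronglyMeasurable (by fun_prop))]
  refine integral_congr_ae (Filter.Eventually.of_forall fun g => ?_)
  simp only [Complex.inner, inner_add_right, inner_smul_right, real_inner_comm g]
  simp

lemma kr_meas (u v : E) : Measurable fun g : E => (⟨inner ℝ u g, inner ℝ v g⟩ : ℂ) := by
  have : (fun g : E => (⟨inner ℝ u g, inner ℝ v g⟩ : ℂ)) =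
    fun g => ((inner ℝ u g : ℝ) : ℂ) + ((inner ℝ v g : ℝ) : ℂ) * Complex.I := by
    ext g; apply Complex.ext <;> simp
  rw [this]; fun_prop

lemma kr_transfer {F : Type*} [NormedAddCommGroup F] [InnerProductSpace ℝ F]
    [FiniteDimensional ℝ F] [MeasurableSpace F] [BorelSpace F] (u v : E) (u' v' : F)
    (h1 : ‖u‖ = ‖u'‖) (h2 : ‖v‖ = ‖v'‖) (h3 : (inner ℝ u v : ℝ) = inner ℝ u' v') :
    ∫ g, krSg (inner ℝ u g) * krSg (inner ℝ v g) ∂(stdGaussian E) =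
    ∫ g, krSg (inner ℝ u' g) * krSg (inner ℝ v' g) ∂(stdGaussian F) := by
  have hmap : (stdGaussian E).map (fun g => (⟨inner ℝ u g, inner ℝ v g⟩ : ℂ)) =
      (stdGaussian F).map (fun g => (⟨inner ℝ u' g, inner ℝ v' g⟩ : ℂ)) := by
    have := Measure.isProbabilityMeasure_map (μ := stdGaussian E) (kr_meas u v).aemeasurable
    have := Measure.isProbabilityMeasure_map (μ := stdGaussian F) (kr_meas u' v').aemeasurable
    apply Measure.ext_of_charFun
    ext t
    rw [kr_charFun, kr_charFun, h1, h2, h3]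
  have hf : Measurable fun w : ℂ => krSg w.re * krSg w.im :=
    (krSg_measurable.comp Complex.measurable_re).mul (krSg_measurable.comp Complex.measurable_im)
  have e1 := integral_map (μ := stdGaussian E) (kr_meas u v).aemeasurable hf.aestronglyMeasurable
  have e2 := integral_map (μ := stdGaussian F) (kr_meas u' v').aemeasurable hf.aestronglyMeasurable
  rw [← e1, ← e2, hmap]
end

lemma kr_ae_ne : ∀ᵐ z ∂(stdGaussian ℂ), z ≠ 0 := by
  have h : (stdGaussian ℂ).map Complex.re = gaussianReal 0 1 := by
    have := Measure.isProbabilityMeasure_map (μ := stdGaussian ℂ)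
      Complex.measurable_re.aemeasurable
    apply Measure.ext_of_charFun
    ext t
    have h := charFun_stdGaussian (t : ℂ)
    rw [charFun_gaussianReal, charFun_apply, integral_map Complex.measurable_re.aemeasurable
      (Measurable.aestronglyMeasurable (by fun_prop))]
    rw [charFun_apply] at h
    simp [Complex.inner] at h ⊢
    rw [neg_div, ← Complex.ofReal_pow, sq_abs, Complex.ofReal_pow] at h
    exact h
  have := nullSingletonClass_gaussianReal (μ := 0) (v := 1) one_ne_zero
  have h0 : (gaussianReal 0 1) {0} = 0 := measure_singleton _
  rw [← h, Measure.map_apply Complex.measurable_re (measurableSet_singleton _)] at h0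
  rw [ae_iff]
  refine measure_mono_null ?_ h0
  intro z hz
  simp at hz
  simp [hz]

lemma kr_circle0 (θ : ℝ) (h0 : 0 ≤ θ) (h1 : θ ≤ π) :
    ∫ φ in (-(π/2))..(-(π/2) + 2 * π), krSg (cos φ) * krSg (cos (φ - θ)) = 2 * π - 4 * θ := by
  have hm : Measurable fun φ => krSg (cos φ) * krSg (cos (φ - θ)) :=
    (krSg_measurable.comp (by fun_prop)).mul (krSg_measurable.comp (by fun_prop))
  have hi : ∀ a b, IntervalIntegrable (fun φ => krSg (cos φ) * krSg (cos (φ - θ))) volume a b := by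
    intro a b
    refine (intervalIntegrable_const (c := (1 : ℝ))).mono_fun hm.aestronglyMeasurable ?_
    refine Filter.Eventually.of_forall fun φ => ?_
    simp [krSg_abs]
  have piece : ∀ (a b c : ℝ), a ≤ b → (∀ φ ∈ Set.Ioo a b, krSg (cos φ) * krSg (cos (φ - θ)) = c) →
      ∫ φ in a..b, krSg (cos φ) * krSg (cos (φ - θ)) = (b - a) * c := by
    intro a b c hab h
    rw [intervalIntegral.integral_of_le hab, integral_Ioc_eq_integral_Ioo,
      setIntegral_congr_fun measurableSet_Ioo h, ← integral_Ioc_eq_integral_Ioo,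
      ← intervalIntegral.integral_of_le hab]
    simp
  have cneg : ∀ t, π / 2 < t → t < 3 * π / 2 → krSg (cos t) = -1 := fun t ha hb =>
    krSg_neg (cos_neg_of_pi_div_two_lt_of_lt ha (by linarith))
  have cpos : ∀ t, -(π / 2) < t → t < π / 2 → krSg (cos t) = 1 := fun t ha hb =>
    krSg_pos (cos_nonneg_of_neg_pi_div_two_le_of_le (by linarith) hb.le)
  have cneg' : ∀ t, -(3 * π / 2) < t → t < -(π / 2) → krSg (cos t) = -1 := fun t ha hb => by
    rw [← cos_neg]; exact cneg _ (by linarith) (by linarith)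
  rw [← intervalIntegral.integral_add_adjacent_intervals (hi _ (θ - π/2)) (hi _ _),
    ← intervalIntegral.integral_add_adjacent_intervals (hi (θ - π/2) (π/2)) (hi _ _),
    ← intervalIntegral.integral_add_adjacent_intervals (hi (π/2) (θ + π/2)) (hi _ _)]
  have := pi_pos
  rw [piece (-(π/2)) (θ - π/2) (-1) (by linarith), piece (θ - π/2) (π/2) 1 (by linarith),
    piece (π/2) (θ + π/2) (-1) (by linarith), piece (θ + π/2) _ 1 (by linarith)]
  · ring
  · rintro φ ⟨ha, hb⟩
    rw [cneg φ (by linarith) (by linarith), cneg _ (by linarith) (by linarith)]; norm_num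
  · rintro φ ⟨ha, hb⟩
    rw [cneg φ (by linarith) (by linarith), cpos _ (by linarith) (by linarith)]; norm_num
  · rintro φ ⟨ha, hb⟩
    rw [cpos φ (by linarith) (by linarith), cpos _ (by linarith) (by linarith)]; norm_num
  · rintro φ ⟨ha, hb⟩
    rw [cpos φ (by linarith) (by linarith), cneg' _ (by linarith) (by linarith)]; norm_num

lemma kr_circle (θ α : ℝ) (h0 : 0 ≤ θ) (h1 : θ ≤ π) :
    ∫ φ in (0 : ℝ)..(2 * π), krSg (cos (φ - α)) * krSg (cos (φ - θ - α)) = 2 * π - 4 * θ := by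
  have hp : Function.Periodic (fun φ => krSg (cos φ) * krSg (cos (φ - θ))) (2 * π) := by
    intro φ
    have : φ + 2 * π - θ = (φ - θ) + 2 * π := by ring
    simp only [this, cos_add_two_pi]
  have e := intervalIntegral.integral_comp_sub_right (a := 0) (b := 2 * π)
    (fun φ => krSg (cos φ) * krSg (cos (φ - θ))) α
  have : ∀ φ, φ - θ - α = φ - α - θ := fun φ => by ring
  simp only [this]
  rw [e, ← kr_circle0 θ h0 h1]
  have := hp.intervalIntegral_add_eq (0 - α) (-(π/2))
  rw [← this]
  congr 1
  ring

lemma kr_plane (θ : ℝ) (h0 : 0 ≤ θ) (h1 : θ ≤ π) (I : ℝ)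
    (hI : ∀ φ : ℝ, I = ∫ z, krSg (inner ℝ (⟨cos φ, sin φ⟩ : ℂ) z) *
      krSg (inner ℝ (⟨cos (φ - θ), sin (φ - θ)⟩ : ℂ) z) ∂(stdGaussian ℂ)) :
    I = 1 - 2 * θ / π := by
  let f : ℝ → ℂ → ℝ := fun φ z => krSg (cos φ * z.re + sin φ * z.im) *
      krSg (cos (φ - θ) * z.re + sin (φ - θ) * z.im)
  have hf : ∀ φ, I = ∫ z, f φ z ∂(stdGaussian ℂ) := by
    intro φ
    rw [hI φ]
    simp only [f, Complex.inner]
    simp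
    simp only [mul_comm]
  have hm : Measurable (Function.uncurry f) :=
    (krSg_measurable.comp (by fun_prop)).mul (krSg_measurable.comp (by fun_prop))
  have hsw : ∫ φ in (0 : ℝ)..(2 * π), ∫ z, f φ z ∂(stdGaussian ℂ) =
      ∫ z, (∫ φ in (0 : ℝ)..(2 * π), f φ z) ∂(stdGaussian ℂ) := by
    rw [intervalIntegral.integral_of_le (by positivity)]
    rw [integral_integral_swap]
    · refine integral_congr_ae (Filter.Eventually.of_forall fun g => ?_)
      simp only
      rw [intervalIntegral.integral_of_le (by positivity)]
    · refine Integrable.mono' (integrable_const (1 : ℝ)) hm.aestronglyMeasurable ?_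
      refine Filter.Eventually.of_forall fun p => ?_
      simp [Function.uncurry, f, krSg_abs]
  have hin : ∀ᵐ z ∂(stdGaussian ℂ), ∫ φ in (0 : ℝ)..(2 * π), f φ z = 2 * π - 4 * θ := by
    filter_upwards [kr_ae_ne] with z hz
    rw [← kr_circle θ z.arg h0 h1]
    have hr : 0 < ‖z‖ := norm_pos_iff.2 hz
    have hfor : ∀ φ, cos φ * z.re + sin φ * z.im = ‖z‖ * cos (φ - z.arg) := by
      intro φ
      have e1 := Complex.norm_mul_cos_arg z
      have e2 := Complex.norm_mul_sin_arg z
      rw [cos_sub]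
      linear_combination -cos φ * e1 - sin φ * e2
    simp only [f, hfor, krSg_mul hr]
  rw [integral_congr_ae hin] at hsw
  simp only [← hf] at hsw
  simp at hsw
  have := pi_pos
  field_simp
  linarith

lemma kr_grothendieck_identity {E : Type*} [NormedAddCommGroup E] [InnerProductSpace ℝ E]
    [FiniteDimensional ℝ E] [MeasurableSpace E] [BorelSpace E] (u v : E)
    (hu : ‖u‖ = 1) (hv : ‖v‖ = 1) :
    ∫ g, krSg (inner ℝ u g) * krSg (inner ℝ v g) ∂(stdGaussian E) =
      2 / π * arcsin (inner ℝ u v) := by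
  have hb : |(inner ℝ u v : ℝ)| ≤ 1 := by
    simpa [hu, hv] using abs_real_inner_le_norm u v
  have hb := abs_le.1 hb
  have key := kr_plane (arccos (inner ℝ u v)) (arccos_nonneg _) (arccos_le_pi _) _
    (fun φ => kr_transfer u v (⟨cos φ, sin φ⟩ : ℂ)
      (⟨cos (φ - arccos (inner ℝ u v)), sin (φ - arccos (inner ℝ u v))⟩ : ℂ) ?_ ?_ ?_)
  · rw [key, arccos]
    have := pi_pos
    field_simp
    ring
  · rw [hu, eq_comm, ← sq_eq_sq₀ (norm_nonneg _) zero_le_one, Complex.sq_norm, Complex.normSq_mk]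
    nlinarith [sin_sq_add_cos_sq φ]
  · rw [hv, eq_comm, ← sq_eq_sq₀ (norm_nonneg _) zero_le_one, Complex.sq_norm, Complex.normSq_mk]
    nlinarith [sin_sq_add_cos_sq (φ - arccos (inner ℝ u v))]
  · set θ := arccos (inner ℝ u v) with hθ
    have : (inner ℝ u v : ℝ) = cos (φ - (φ - θ)) := by
      rw [sub_sub_cancel, hθ, cos_arccos hb.1 hb.2]
    rw [this, cos_sub]
    simp [Complex.inner]
    try ring

end Krivine

/-- Krivine's bound for the Grothendieck inequality: for every real `m × n` matrix `A`
and all unit vectors `x i`, `y j` in `ℝ^d`, the bilinear form evaluated on the vectors is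
at most `π / (2 log(1 + √2))` times the maximum over signs. -/
theorem grothendieck_inequality_krivine
    (m n : ℕ) (A : Matrix (Fin m) (Fin n) ℝ) (d : ℕ)
    (x : Fin m → EuclideanSpace ℝ (Fin d)) (y : Fin n → EuclideanSpace ℝ (Fin d))
    (hx : ∀ i, ‖x i‖ = 1) (hy : ∀ j, ‖y j‖ = 1) :
    ∑ i, ∑ j, A i j * (inner ℝ (x i) (y j) : ℝ) ≤
      (π / (2 * Real.log (1 + Real.sqrt 2))) *
        sSup {s : ℝ | ∃ (ε : Fin m → ℝ) (δ : Fin n → ℝ),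
          (∀ i, ε i = 1 ∨ ε i = -1) ∧ (∀ j, δ j = 1 ∨ δ j = -1) ∧
          s = ∑ i, ∑ j, A i j * ε i * δ j} := by
  set S := {s : ℝ | ∃ (ε : Fin m → ℝ) (δ : Fin n → ℝ),
          (∀ i, ε i = 1 ∨ ε i = -1) ∧ (∀ j, δ j = 1 ∨ δ j = -1) ∧
          s = ∑ i, ∑ j, A i j * ε i * δ j} with hS
  set c := Real.log (1 + Real.sqrt 2) with hc
  have hca : c = arsinh 1 := by rw [hc, arsinh]; norm_num
  have hsc : sinh c = 1 := by rw [hca, sinh_arsinh]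
  have hc0 : 0 < c := by rw [hca, arsinh_pos_iff]; norm_num
  have hc1 : c ≤ π / 2 := by
    have h1 : c ≤ (1 + √2) - 1 := Real.log_le_sub_one_of_pos (by positivity)
    have h2 : √2 ≤ 1.5 := by
      rw [Real.sqrt_le_left (by norm_num)]; norm_num
    have := pi_gt_three
    linarith
  have hbdd : BddAbove S := by
    refine ⟨∑ i, ∑ j, |A i j|, ?_⟩
    rintro _ ⟨ε, δ, hε, hδ, rfl⟩
    refine Finset.sum_le_sum fun i _ => Finset.sum_le_sum fun j _ => ?_
    rcases hε i with h | h <;> rcases hδ j with h' | h' <;>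
      simp [h, h', le_abs_self, neg_le_abs]
  obtain ⟨u, v, hu, hv, huv⟩ := kr_vectors x y hx hy c hc0.le hsc
  let γ := ProbabilityTheory.stdGaussian (EuclideanSpace ℝ (Fin m ⊕ Fin n))
  have hint : ∀ i j, MeasureTheory.Integrable
      (fun g => krSg (inner ℝ (u i) g) * krSg (inner ℝ (v j) g)) γ := by
    intro i j
    have hm : Measurable (fun g => krSg (inner ℝ (u i) g) * krSg (inner ℝ (v j) g)) :=
      (krSg_measurable.comp (by fun_prop)).mul (krSg_measurable.comp (by fun_prop))
    refine MeasureTheory.Integrable.mono' (MeasureTheory.integrable_const (1 : ℝ))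
      hm.aestronglyMeasurable ?_
    refine Filter.Eventually.of_forall fun p => ?_
    simp [krSg_abs]
  have hasin : ∀ i j, arcsin (inner ℝ (u i) (v j)) = c * inner ℝ (x i) (y j) := by
    intro i j
    have hb : |(inner ℝ (x i) (y j) : ℝ)| ≤ 1 := by
      simpa [hx, hy] using abs_real_inner_le_norm (x i) (y j)
    have hb := abs_le.1 hb
    rw [huv, arcsin_sin] <;> nlinarith
  have hE : ∀ a : Fin m → Fin n → ℝ, ∫ g, (∑ i, ∑ j, a i j * (krSg (inner ℝ (u i) g) * krSg (inner ℝ (v j) g))) ∂γ =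
      2 / π * c * ∑ i, ∑ j, a i j * (inner ℝ (x i) (y j) : ℝ) := by
    intro a
    rw [MeasureTheory.integral_finsetSum _ fun i _ =>
      MeasureTheory.integrable_finsetSum _ fun j _ => (hint i j).const_mul _, Finset.mul_sum]
    refine Finset.sum_congr rfl fun i _ => ?_
    rw [MeasureTheory.integral_finsetSum _ fun j _ => (hint i j).const_mul _, Finset.mul_sum]
    refine Finset.sum_congr rfl fun j _ => ?_
    rw [MeasureTheory.integral_const_mul, kr_grothendieck_identity _ _ (hu i) (hv j), hasin]
    ring
  have hle : ∫ g, (∑ i, ∑ j, A i j * (krSg (inner ℝ (u i) g) * krSg (inner ℝ (v j) g))) ∂γ ≤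
      sSup S := by
    have : ∫ _g, sSup S ∂γ = sSup S := by simp [γ]
    rw [← this]
    refine MeasureTheory.integral_mono (MeasureTheory.integrable_finsetSum _ fun i _ =>
      MeasureTheory.integrable_finsetSum _ fun j _ => (hint i j).const_mul _)
      (MeasureTheory.integrable_const _) fun g => ?_
    refine le_csSup hbdd ⟨fun i => krSg (inner ℝ (u i) g), fun j => krSg (inner ℝ (v j) g),
      fun i => krSg_or _, fun j => krSg_or _, ?_⟩
    simp only [mul_assoc]
  rw [hE A] at hle
  have hpi := pi_pos
  calc _ = π / (2 * c) * (2 / π * c * ∑ i, ∑ j, A i j * (inner ℝ (x i) (y j) : ℝ)) := by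
        field_simp
    _ ≤ _ := by gcongr
end

section
/- For every n ∈ ℕ, every symmetric positive semidefinite n × n real matrix A = (a_{ij}), and all unit vectors x_1, …, x_n ∈ ℝⁿ, one has ∑_{i=1}^n ∑_{j=1}^n a_{ij} ⟨x_i, x_j⟩ ≤ (π/2) · max over signs ε_1, …, ε_n ∈ {−1, 1} of ∑_{i=1}^n ∑_{j=1}^n a_{ij} ε_i ε_j. -/
open Real MeasureTheory ProbabilityTheory

/-- First absolute moment of the standard Gaussian. -/
lemma gauss_abs : ∫ t, |t| ∂(gaussianReal 0 1) = 2 * (√(2 * π))⁻¹ := by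
  rw [integral_gaussianReal_eq_integral_smul one_ne_zero]
  have h := integral_comp_abs (f := fun t : ℝ => (√(2 * π))⁻¹ * (t * Real.exp (-(1/2) * t ^ 2)))
  have h2 := integral_rpow_mul_exp_neg_mul_rpow (p := 2) (q := 1) (b := 1/2)
    (by norm_num) (by norm_num) (by norm_num)
  have h3 : ∫ t in Set.Ioi (0:ℝ), t * Real.exp (-(1/2) * t ^ 2) = 1 := by
    have e : (-(1 + 1) / 2 : ℝ) = -1 := by norm_num
    have e' : ((1 + 1) / 2 : ℝ) = 1 := by norm_num
    rw [e, e', Real.Gamma_one, Real.rpow_neg_one] at h2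
    simp only [Real.rpow_one, Real.rpow_two] at h2
    rw [h2]; norm_num
  rw [integral_const_mul (μ := volume.restrict (Set.Ioi (0:ℝ))), h3] at h
  rw [mul_one] at h
  rw [← h]
  congr 1
  ext t
  simp only [gaussianPDFReal, smul_eq_mul, NNReal.coe_one, sq_abs]
  have e : -(t - 0) ^ 2 / (2 * 1) = -(1/2) * t ^ 2 := by ring
  rw [e, mul_one]
  ring

/-- The sign function with values in `{-1, 1}`. -/
noncomputable def sg (t : ℝ) : ℝ := if 0 ≤ t then 1 else -1

lemma sg_or (t : ℝ) : sg t = 1 ∨ sg t = -1 := by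
  unfold sg; split_ifs <;> simp

lemma sg_mul (t : ℝ) : sg t * t = |t| := by
  unfold sg; split_ifs with h
  · rw [abs_of_nonneg h, one_mul]
  · rw [abs_of_neg (not_le.1 h)]; ring

lemma sg_meas : Measurable sg :=
  Measurable.ite measurableSet_Ici measurable_const measurable_const

section helpers
variable {n : ℕ}

lemma memLp_inner (x : EuclideanSpace ℝ (Fin n)) :
    MemLp (fun g => inner ℝ x g) 2 (stdGaussian (EuclideanSpace ℝ (Fin n))) :=
  IsGaussian.memLp_dual _ (innerSL ℝ x) 2 (by simp)

lemma int_inner_mul (x y : EuclideanSpace ℝ (Fin n)) :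
    ∫ g, inner ℝ x g * inner ℝ y g ∂(stdGaussian (EuclideanSpace ℝ (Fin n))) = inner ℝ x y := by
  have h := covarianceBilin_apply_eq_cov (μ := stdGaussian (EuclideanSpace ℝ (Fin n)))
    IsGaussian.memLp_two_id x y
  rw [covarianceBilin_stdGaussian, covariance_eq_sub (memLp_inner x) (memLp_inner y)] at h
  have h0 := integral_strongDual_stdGaussian (innerSL ℝ x)
  simp only [innerSL_apply_apply] at h0 h
  rw [h0, zero_mul, sub_zero] at h
  exact h.symm

lemma map_inner (y : EuclideanSpace ℝ (Fin n)) (hy : ‖y‖ = 1) :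
    (stdGaussian (EuclideanSpace ℝ (Fin n))).map (fun g => inner ℝ y g) = gaussianReal 0 1 := by
  have h := IsGaussian.map_eq_gaussianReal (μ := stdGaussian (EuclideanSpace ℝ (Fin n)))
    (innerSL ℝ y)
  rw [integral_strongDual_stdGaussian, variance_dual_stdGaussian, innerSL_apply_norm, hy] at h
  simpa using h

lemma integrable_sg (x y : EuclideanSpace ℝ (Fin n)) :
    Integrable (fun g => sg (inner ℝ y g) * inner ℝ x g)
      (stdGaussian (EuclideanSpace ℝ (Fin n))) := by
  refine ((memLp_inner x).integrable (by norm_num)).bdd_mul (c := 1) ?_ ?_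
  · exact (sg_meas.comp (by fun_prop)).aestronglyMeasurable
  · refine Filter.Eventually.of_forall fun g => ?_
    rcases sg_or (inner ℝ y g) with h | h <;> rw [h] <;> simp

lemma int_sg_orth (z y : EuclideanSpace ℝ (Fin n)) (h : inner ℝ y z = 0) :
    ∫ g, sg (inner ℝ y g) * inner ℝ z g ∂(stdGaussian (EuclideanSpace ℝ (Fin n))) = 0 := by
  set R := (Submodule.span ℝ {y}).reflection with hR
  have hm := stdGaussian_map R
  have h1 : ∫ g, sg (inner ℝ y g) * inner ℝ z g ∂(stdGaussian (EuclideanSpace ℝ (Fin n)))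
      = ∫ g, sg (inner ℝ y (R g)) * inner ℝ z (R g)
        ∂(stdGaussian (EuclideanSpace ℝ (Fin n))) := by
    conv_lhs => rw [← hm]
    rw [integral_map]
    · exact R.continuous.measurable.aemeasurable
    · exact ((sg_meas.comp (by fun_prop)).mul (by fun_prop)).aestronglyMeasurable
  have hsw : ∀ u g, inner ℝ u (R g) = inner ℝ (R u) g := by
    intro u g
    rw [← R.inner_map_map u (R g)]
    simp [hR]
  have hRy : R y = y :=
    Submodule.reflection_mem_subspace_eq_self (Submodule.mem_span_singleton_self y)
  have hRz : R z = -z := by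
    apply Submodule.reflection_mem_subspace_orthogonalComplement_eq_neg
    rw [Submodule.mem_orthogonal_singleton_iff_inner_right]
    exact h
  simp only [hsw, hRy, hRz, inner_neg_left, mul_neg, integral_neg] at h1
  linarith

lemma int_sg (x y : EuclideanSpace ℝ (Fin n)) (hy : ‖y‖ = 1) :
    ∫ g, sg (inner ℝ y g) * inner ℝ x g ∂(stdGaussian (EuclideanSpace ℝ (Fin n)))
      = 2 * (√(2 * π))⁻¹ * inner ℝ y x := by
  have hyy : inner ℝ y y = 1 := by rw [real_inner_self_eq_norm_sq, hy]; norm_num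
  have h0 := int_sg_orth (x - inner ℝ y x • y) y (by
    rw [inner_sub_right, real_inner_smul_right, hyy]; ring)
  have h1 : ∫ g, sg (inner ℝ y g) * inner ℝ y g ∂(stdGaussian (EuclideanSpace ℝ (Fin n)))
      = 2 * (√(2 * π))⁻¹ := by
    rw [← gauss_abs, ← map_inner y hy, integral_map]
    · simp only [sg_mul]
    · exact Measurable.aemeasurable (by fun_prop)
    · exact Continuous.aestronglyMeasurable (by fun_prop)
  have h2 : ∀ g, sg (inner ℝ y g) * inner ℝ (x - inner ℝ y x • y) g
      = sg (inner ℝ y g) * inner ℝ x g - inner ℝ y x * (sg (inner ℝ y g) * inner ℝ y g) := by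
    intro g
    rw [inner_sub_left, real_inner_smul_left]; ring
  simp only [h2] at h0
  rw [integral_sub (integrable_sg x y) ((integrable_sg y y).const_mul _), integral_const_mul,
    h1] at h0
  linarith

end helpers

/-- The positive semidefinite Grothendieck inequality with the sharp constant `π/2`:
for every symmetric positive semidefinite `n × n` real matrix `A` and all unit vectors
`x₁, …, xₙ ∈ ℝⁿ`, the vector quadratic form is at most `(π/2)` times the maximum over
signs `ε ∈ {−1,1}ⁿ` of the quadratic form. -/
theorem psd_grothendieck_inequality {n : ℕ} (A : Matrix (Fin n) (Fin n) ℝ)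
    (hsymm : ∀ i j, A i j = A j i)
    (hpsd : ∀ t : Fin n → ℝ, 0 ≤ ∑ i, ∑ j, A i j * t i * t j)
    (x : Fin n → EuclideanSpace ℝ (Fin n)) (hx : ∀ i, ‖x i‖ = 1) :
    ∑ i, ∑ j, A i j * (inner ℝ (x i) (x j) : ℝ) ≤
      (π / 2) * sSup {s : ℝ | ∃ ε : Fin n → ℝ, (∀ i, ε i = 1 ∨ ε i = -1) ∧
        s = ∑ i, ∑ j, A i j * ε i * ε j} := by
  classical
  set S := {s : ℝ | ∃ ε : Fin n → ℝ, (∀ i, ε i = 1 ∨ ε i = -1) ∧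
        s = ∑ i, ∑ j, A i j * ε i * ε j} with hS
  have hbdd : BddAbove S := by
    refine ⟨∑ i, ∑ j, |A i j|, ?_⟩
    rintro s ⟨ε, hε, rfl⟩
    refine Finset.sum_le_sum fun i _ => Finset.sum_le_sum fun j _ => ?_
    refine (le_abs_self _).trans ?_
    have h1 : ∀ i, |ε i| = 1 := fun i => by rcases hε i with h | h <;> rw [h] <;> simp
    rw [abs_mul, abs_mul, h1, h1]; simp
  set μ := stdGaussian (EuclideanSpace ℝ (Fin n)) with hμ
  set c : ℝ := 2 * (√(2 * π))⁻¹ with hc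
  have hc2 : c ^ 2 = 2 / π := by
    rw [hc, mul_pow, inv_pow, Real.sq_sqrt (by positivity)]
    field_simp
  set F : EuclideanSpace ℝ (Fin n) → ℝ := fun g => ∑ i, ∑ j,
    (2 * c * A i j * (sg (inner ℝ (x i) g) * inner ℝ (x j) g)
      - c ^ 2 * A i j * (inner ℝ (x i) g * inner ℝ (x j) g)) with hF
  have hFle : ∀ g, F g ≤ sSup S := by
    intro g
    have hm : ∑ i, ∑ j, A i j * sg (inner ℝ (x i) g) * sg (inner ℝ (x j) g) ≤ sSup S :=
      le_csSup hbdd ⟨fun i => sg (inner ℝ (x i) g), fun i => sg_or _, rfl⟩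
    refine le_trans ?_ hm
    have hp := hpsd (fun i => sg (inner ℝ (x i) g) - c * inner ℝ (x i) g)
    have hsw : ∑ i, ∑ j, A i j * (sg (inner ℝ (x i) g) * inner ℝ (x j) g)
        = ∑ i, ∑ j, A i j * (inner ℝ (x i) g * sg (inner ℝ (x j) g)) := by
      rw [Finset.sum_comm]
      refine Finset.sum_congr rfl fun i _ => Finset.sum_congr rfl fun j _ => ?_
      rw [hsymm j i]; ring
    have e1 : ∑ i, ∑ j, A i j * (sg (inner ℝ (x i) g) - c * inner ℝ (x i) g)
          * (sg (inner ℝ (x j) g) - c * inner ℝ (x j) g)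
        = ∑ i, ∑ j, A i j * sg (inner ℝ (x i) g) * sg (inner ℝ (x j) g) - F g
          + c * (∑ i, ∑ j, A i j * (sg (inner ℝ (x i) g) * inner ℝ (x j) g)
            - ∑ i, ∑ j, A i j * (inner ℝ (x i) g * sg (inner ℝ (x j) g))) := by
      simp only [hF, Finset.mul_sum, mul_sub, ← Finset.sum_sub_distrib, ← Finset.sum_add_distrib]
      refine Finset.sum_congr rfl fun i _ => Finset.sum_congr rfl fun j _ => ?_
      ring
    rw [hsw, sub_self, mul_zero, add_zero] at e1
    rw [e1] at hp
    linarith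
  have hi1 : ∀ i j, Integrable (fun g => 2 * c * A i j *
      (sg (inner ℝ (x i) g) * inner ℝ (x j) g)) μ :=
    fun i j => (integrable_sg (x j) (x i)).const_mul _
  have hi2 : ∀ i j, Integrable (fun g => c ^ 2 * A i j *
      (inner ℝ (x i) g * inner ℝ (x j) g)) μ :=
    fun i j => ((memLp_inner (x i)).integrable_mul (memLp_inner (x j))).const_mul _
  have hi3 : ∀ i j, Integrable (fun g => 2 * c * A i j *
      (sg (inner ℝ (x i) g) * inner ℝ (x j) g) - c ^ 2 * A i j *
      (inner ℝ (x i) g * inner ℝ (x j) g)) μ := fun i j => (hi1 i j).sub (hi2 i j)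
  have hi4 : ∀ i, Integrable (fun g => ∑ j, (2 * c * A i j *
      (sg (inner ℝ (x i) g) * inner ℝ (x j) g) - c ^ 2 * A i j *
      (inner ℝ (x i) g * inner ℝ (x j) g))) μ :=
    fun i => integrable_finsetSum _ fun j _ => hi3 i j
  have hFint : Integrable F μ := integrable_finsetSum _ fun i _ => hi4 i
  have hval : ∫ g, F g ∂μ = c ^ 2 * ∑ i, ∑ j, A i j * (inner ℝ (x i) (x j) : ℝ) := by
    simp only [hF]
    rw [integral_finsetSum _ fun i _ => hi4 i, Finset.mul_sum]
    refine Finset.sum_congr rfl fun i _ => ?_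
    rw [integral_finsetSum _ fun j _ => hi3 i j, Finset.mul_sum]
    refine Finset.sum_congr rfl fun j _ => ?_
    rw [integral_sub (hi1 i j) (hi2 i j), integral_const_mul, integral_const_mul,
      int_sg _ _ (hx i), int_inner_mul, ← hc]
    ring
  have hle : ∫ g, F g ∂μ ≤ sSup S := by
    have := integral_mono hFint (integrable_const (sSup S)) hFle
    simpa using this
  rw [hval, hc2] at hle
  have hpi := Real.pi_pos
  calc _ = π / 2 * (2 / π * ∑ i, ∑ j, A i j * (inner ℝ (x i) (x j) : ℝ)) := by
        field_simp
    _ ≤ _ := by gcongr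
end

section
/- Fix p ∈ [2, ∞) and let γ_p = √2 · (Γ((p+1)/2)/√π)^{1/p}, i.e., γ_p = (E|G|^p)^{1/p} where G is a standard Gaussian random variable. Then for every n × n real matrix A = (a_{ij}) and all vectors x_1, …, x_n ∈ ℝⁿ satisfying ∑_{k=1}^n ‖x_k‖₂^p ≤ 1, one has ∑_{i=1}^n ∑_{j=1}^n a_{ij} ⟨x_i, x_j⟩ ≤ γ_p² · max{∑_{i=1}^n ∑_{j=1}^n a_{ij} t_i t_j : t ∈ ℝⁿ, ∑_{k=1}^n |t_k|^p ≤ 1}. -/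
open Real

open MeasureTheory ProbabilityTheory in
lemma lpg_moment (p : ℝ) (hp : 2 ≤ p) :
    ∫ t, |t| ^ p ∂(gaussianReal 0 1) = 2 ^ (p / 2) * (Real.Gamma ((p + 1) / 2) / Real.sqrt π) := by
  rw [integral_gaussianReal_eq_integral_smul one_ne_zero]
  have h1 : ∀ t : ℝ, gaussianPDFReal 0 1 t • |t| ^ p =
      (fun s : ℝ => (√(2 * π))⁻¹ * (s ^ p * rexp (-(1 / 2) * s ^ (2 : ℝ)))) |t| := by
    intro t
    simp only [gaussianPDFReal, smul_eq_mul, NNReal.coe_one, mul_one, sub_zero, Real.rpow_two, sq_abs]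
    rw [show -t ^ 2 / 2 = -(1 / 2) * t ^ 2 by ring]
    ring
  rw [integral_congr_ae (ae_of_all _ h1),
    integral_comp_abs (f := fun s : ℝ => (√(2 * π))⁻¹ * (s ^ p * rexp (-(1 / 2) * s ^ (2 : ℝ)))),
    integral_const_mul,
    integral_rpow_mul_exp_neg_mul_rpow (by norm_num) (by linarith) (by norm_num)]
  have h2 : (1 / 2 : ℝ) ^ (-(p + 1) / 2) = 2 ^ (p / 2) * √2 := by
    rw [one_div, Real.inv_rpow (by norm_num), ← Real.rpow_neg (by norm_num), Real.sqrt_eq_rpow,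
      ← Real.rpow_add (by norm_num)]
    congr 1
    ring
  rw [h2, Real.sqrt_mul (by norm_num)]
  have : √π ≠ 0 := (Real.sqrt_pos.2 Real.pi_pos).ne'
  field_simp

open MeasureTheory ProbabilityTheory in
lemma lpg_map {n : ℕ} (x : EuclideanSpace ℝ (Fin n)) :
    (stdGaussian (EuclideanSpace ℝ (Fin n))).map (fun z => (inner ℝ x z : ℝ)) =
      (gaussianReal 0 1).map (fun t => ‖x‖ * t) := by
  have h := IsGaussian.map_eq_gaussianReal (μ := stdGaussian (EuclideanSpace ℝ (Fin n)))
    (innerSL ℝ x)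
  rw [variance_dual_stdGaussian, integral_strongDual_stdGaussian, innerSL_apply_norm] at h
  rw [gaussianReal_map_const_mul]
  have e : (fun z => (inner ℝ x z : ℝ)) = (innerSL ℝ x : EuclideanSpace ℝ (Fin n) → ℝ) := by
    ext z; simp
  rw [e, h]
  congr 1
  · simp
  · ext; simp

open MeasureTheory ProbabilityTheory in
lemma lpg_absmoment {n : ℕ} (p : ℝ) (hp : 2 ≤ p) (x : EuclideanSpace ℝ (Fin n)) :
    Integrable (fun z => |(inner ℝ x z : ℝ)| ^ p) (stdGaussian (EuclideanSpace ℝ (Fin n))) ∧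
    ∫ z, |(inner ℝ x z : ℝ)| ^ p ∂(stdGaussian (EuclideanSpace ℝ (Fin n))) =
      ‖x‖ ^ p * (2 ^ (p / 2) * (Real.Gamma ((p + 1) / 2) / Real.sqrt π)) := by
  constructor
  · have h := IsGaussian.memLp_dual (stdGaussian (EuclideanSpace ℝ (Fin n))) (innerSL ℝ x)
      (ENNReal.ofReal p) (by simp)
    have h2 := h.integrable_norm_rpow (by simp; linarith) (by simp)
    rw [ENNReal.toReal_ofReal (by linarith)] at h2
    simpa using h2
  · have h := integral_map (μ := stdGaussian (EuclideanSpace ℝ (Fin n)))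
      (φ := fun z => (inner ℝ x z : ℝ)) (f := fun t : ℝ => |t| ^ p)
      (by fun_prop) (Measurable.aestronglyMeasurable (by fun_prop))
    rw [← h, lpg_map, integral_map (by fun_prop) (Measurable.aestronglyMeasurable (by fun_prop)),
      ← lpg_moment p hp, ← integral_const_mul]
    congr 1
    ext t
    rw [abs_mul, Real.mul_rpow (abs_nonneg _) (abs_nonneg _), abs_norm]

open MeasureTheory ProbabilityTheory in
lemma lpg_cov {n : ℕ} (x y : EuclideanSpace ℝ (Fin n)) :
    Integrable (fun z => (inner ℝ x z : ℝ) * inner ℝ y z)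
      (stdGaussian (EuclideanSpace ℝ (Fin n))) ∧
    ∫ z, (inner ℝ x z : ℝ) * inner ℝ y z ∂(stdGaussian (EuclideanSpace ℝ (Fin n))) =
      inner ℝ x y := by
  constructor
  · have hx := IsGaussian.memLp_dual (stdGaussian (EuclideanSpace ℝ (Fin n))) (innerSL ℝ x)
      2 (by simp)
    have hy := IsGaussian.memLp_dual (stdGaussian (EuclideanSpace ℝ (Fin n))) (innerSL ℝ y)
      2 (by simp)
    exact hx.integrable_mul hy
  · have h := covarianceBilin_apply (μ := stdGaussian (EuclideanSpace ℝ (Fin n)))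
      IsGaussian.memLp_two_id x y
    rw [covarianceBilin_stdGaussian] at h
    have hid : ∫ z, id z ∂(stdGaussian (EuclideanSpace ℝ (Fin n))) = 0 :=
      integral_id_stdGaussian
    rw [hid] at h
    simp only [sub_zero] at h
    rw [← h]

    exact innerSL_apply_apply ℝ x y
lemma lpg_bdd {n : ℕ} (p : ℝ) (hp : 2 ≤ p) (A : Matrix (Fin n) (Fin n) ℝ) :
    BddAbove {s : ℝ | ∃ t : Fin n → ℝ, (∑ k, |t k| ^ p) ≤ 1 ∧
        s = ∑ i, ∑ j, A i j * t i * t j} := by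
  refine ⟨∑ i, ∑ j, |A i j|, ?_⟩
  rintro s ⟨t, ht, rfl⟩
  have hb : ∀ k, |t k| ≤ 1 := by
    intro k
    have h1 : |t k| ^ p ≤ 1 := le_trans
      (Finset.single_le_sum (f := fun k => |t k| ^ p) (fun i _ => by positivity)
        (Finset.mem_univ k)) ht
    by_contra hc
    push Not at hc
    exact absurd (Real.one_lt_rpow hc (by linarith : 0 < p)) (not_lt.2 h1)
  refine Finset.sum_le_sum fun i _ => Finset.sum_le_sum fun j _ => ?_
  refine (le_abs_self _).trans ?_
  rw [abs_mul, abs_mul, mul_assoc]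
  exact mul_le_of_le_one_right (abs_nonneg _) (mul_le_one₀ (hb i) (abs_nonneg _) (hb j))

lemma lpg_point {n : ℕ} (p : ℝ) (hp : 2 ≤ p) (A : Matrix (Fin n) (Fin n) ℝ) (M : ℝ)
    (hM : ∀ t : Fin n → ℝ, (∑ k, |t k| ^ p) ≤ 1 → ∑ i, ∑ j, A i j * t i * t j ≤ M)
    (t : Fin n → ℝ) :
    ∑ i, ∑ j, A i j * t i * t j ≤ M * (∑ k, |t k| ^ p) ^ (2 / p) := by
  have hp0 : 0 < p := by linarith
  set S := ∑ k, |t k| ^ p with hS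
  have hS0 : 0 ≤ S := Finset.sum_nonneg fun i _ => by positivity
  rcases hS0.eq_or_lt with h0 | h0
  · have hz : ∀ k, t k = 0 := by
      intro k
      have h1 := (Finset.sum_eq_zero_iff_of_nonneg
        (f := fun k => |t k| ^ p) (s := Finset.univ) (fun i _ => by positivity)).1 h0.symm k
        (Finset.mem_univ k)
      simpa using (Real.rpow_eq_zero (abs_nonneg _) hp0.ne').1 h1
    rw [← h0, Real.zero_rpow (by positivity)]
    simp [hz]
  · set c := S ^ (1 / p) with hc
    have hc0 : 0 < c := Real.rpow_pos_of_pos h0 _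
    have hcp : c ^ p = S := by
      rw [hc, ← Real.rpow_mul hS0, one_div_mul_cancel hp0.ne', Real.rpow_one]
    have hc2 : S ^ (2 / p) = c ^ 2 := by
      rw [hc, ← Real.rpow_natCast, ← Real.rpow_mul hS0]
      congr 1
      push_cast
      ring
    have h := hM (fun k => t k / c) (by
      simp_rw [abs_div, abs_of_pos hc0, Real.div_rpow (abs_nonneg _) hc0.le, hcp]
      rw [← Finset.sum_div, ← hS, div_self h0.ne'])
    have e : ∑ i, ∑ j, A i j * (t i / c) * (t j / c) = (∑ i, ∑ j, A i j * t i * t j) / c ^ 2 := by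
      simp_rw [Finset.sum_div]
      refine Finset.sum_congr rfl fun i _ => Finset.sum_congr rfl fun j _ => ?_
      field_simp
    simp only [e] at h
    rw [hc2]
    exact (div_le_iff₀ (by positivity)).1 h

/-- The `L_p` Grothendieck inequality for `p ∈ [2, ∞)`, with the sharp constant
`γ_p² = (E|G|^p)^{2/p}` where `G` is a standard Gaussian:
`γ_p = √2 (Γ((p+1)/2)/√π)^{1/p}`. -/
theorem lp_grothendieck_inequality {n : ℕ} (p : ℝ) (hp : 2 ≤ p)
    (γ : ℝ) (hγ : γ = Real.sqrt 2 * (Real.Gamma ((p + 1) / 2) / Real.sqrt π) ^ (1 / p))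
    (A : Matrix (Fin n) (Fin n) ℝ)
    (x : Fin n → EuclideanSpace ℝ (Fin n)) (hx : ∑ k, ‖x k‖ ^ p ≤ 1) :
    ∑ i, ∑ j, A i j * (inner ℝ (x i) (x j) : ℝ) ≤
      γ ^ 2 * sSup {s : ℝ | ∃ t : Fin n → ℝ, (∑ k, |t k| ^ p) ≤ 1 ∧
        s = ∑ i, ∑ j, A i j * t i * t j} := by
  have hp0 : 0 < p := by linarith
  set M := sSup {s : ℝ | ∃ t : Fin n → ℝ, (∑ k, |t k| ^ p) ≤ 1 ∧
        s = ∑ i, ∑ j, A i j * t i * t j} with hMdef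
  have hM : ∀ t : Fin n → ℝ, (∑ k, |t k| ^ p) ≤ 1 → ∑ i, ∑ j, A i j * t i * t j ≤ M :=
    fun t ht => le_csSup (lpg_bdd p hp A) ⟨t, ht, rfl⟩
  have hM0 : 0 ≤ M := by
    have := hM (fun _ => 0) (by simp [Real.zero_rpow hp0.ne'])
    simpa using this
  set K := 2 ^ (p / 2) * (Real.Gamma ((p + 1) / 2) / Real.sqrt π) with hK
  have hG0 : 0 < Real.Gamma ((p + 1) / 2) := Real.Gamma_pos_of_pos (by linarith)
  have hG1 : 0 < Real.Gamma ((p + 1) / 2) / Real.sqrt π :=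
    div_pos hG0 (Real.sqrt_pos.2 Real.pi_pos)
  have hK0 : 0 < K := by positivity
  have hγK : γ ^ 2 = K ^ (2 / p) := by
    rw [hγ, hK, mul_pow, Real.sq_sqrt (by norm_num), Real.mul_rpow (by positivity) hG1.le,
      ← Real.rpow_mul (by norm_num), ← Real.rpow_natCast (_ ^ (1 / p)), ← Real.rpow_mul hG1.le]
    congr 1
    · rw [show p / 2 * (2 / p) = 1 by field_simp, Real.rpow_one]
    · congr 1
      push_cast
      ring
  -- tangent line bound
  have hpt : ∀ t : Fin n → ℝ, ∑ i, ∑ j, A i j * t i * t j ≤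
      M * γ ^ 2 * (2 / p * (∑ k, |t k| ^ p) / K + (1 - 2 / p)) := by
    intro t
    refine (lpg_point p hp A M hM t).trans ?_
    have hS0 : 0 ≤ ∑ k, |t k| ^ p := Finset.sum_nonneg fun i _ => by positivity
    have hy0 : 0 ≤ (∑ k, |t k| ^ p) / K := by positivity
    have hle : 2 / p ≤ 1 := (div_le_one hp0).2 hp
    have h := Real.geom_mean_le_arith_mean2_weighted (w₁ := 2 / p) (w₂ := 1 - 2 / p)
      (p₁ := (∑ k, |t k| ^ p) / K) (p₂ := 1) (by positivity) (by linarith) hy0 zero_le_one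
      (by ring)
    rw [Real.one_rpow, mul_one, mul_one, Real.div_rpow hS0 hK0.le, ← hγK] at h
    have hg : 0 < γ ^ 2 := by rw [hγK]; positivity
    rw [div_le_iff₀ hg] at h
    rw [mul_assoc]
    refine mul_le_mul_of_nonneg_left (h.trans (le_of_eq ?_)) hM0
    ring
  set P := ProbabilityTheory.stdGaussian (EuclideanSpace ℝ (Fin n)) with hP
  have hij : ∀ i j, MeasureTheory.Integrable
      (fun z => A i j * (inner ℝ (x i) z : ℝ) * inner ℝ (x j) z) P := by
    intro i j
    simpa only [mul_assoc] using (lpg_cov (x i) (x j)).1.const_mul (A i j)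
  have hI1 : ∑ i, ∑ j, A i j * (inner ℝ (x i) (x j) : ℝ) =
      ∫ z, ∑ i, ∑ j, A i j * (inner ℝ (x i) z : ℝ) * inner ℝ (x j) z ∂P := by
    rw [MeasureTheory.integral_finsetSum _ fun i _ =>
      MeasureTheory.integrable_finsetSum _ fun j _ => hij i j]
    refine Finset.sum_congr rfl fun i _ => ?_
    rw [MeasureTheory.integral_finsetSum _ fun j _ => hij i j]
    refine Finset.sum_congr rfl fun j _ => ?_
    rw [← (lpg_cov (x i) (x j)).2, ← MeasureTheory.integral_const_mul]
    refine MeasureTheory.integral_congr_ae (Filter.Eventually.of_forall fun z => ?_)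
    exact (mul_assoc _ _ _).symm
  have hint1 : MeasureTheory.Integrable
      (fun z => ∑ i, ∑ j, A i j * (inner ℝ (x i) z : ℝ) * inner ℝ (x j) z) P :=
    MeasureTheory.integrable_finsetSum _ fun i _ =>
      MeasureTheory.integrable_finsetSum _ fun j _ => hij i j
  have hint2 : MeasureTheory.Integrable (fun z => ∑ k, |(inner ℝ (x k) z : ℝ)| ^ p) P :=
    MeasureTheory.integrable_finsetSum _ fun k _ => (lpg_absmoment p hp (x k)).1
  have hI2 : ∫ z, ∑ k, |(inner ℝ (x k) z : ℝ)| ^ p ∂P = (∑ k, ‖x k‖ ^ p) * K := by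
    rw [MeasureTheory.integral_finsetSum _ fun k _ => (lpg_absmoment p hp (x k)).1,
      Finset.sum_mul]
    exact Finset.sum_congr rfl fun k _ => (lpg_absmoment p hp (x k)).2
  have hint3 : MeasureTheory.Integrable
      (fun z => 2 / p * (∑ k, |(inner ℝ (x k) z : ℝ)| ^ p) / K) P :=
    (hint2.const_mul _).div_const _
  have hfin := MeasureTheory.integral_mono hint1
    ((hint3.add (MeasureTheory.integrable_const (1 - 2 / p))).const_mul (M * γ ^ 2))
    (fun z => hpt (fun k => inner ℝ (x k) z))
  rw [hI1]
  refine hfin.trans ?_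
  simp only [Pi.add_apply]
  rw [MeasureTheory.integral_const_mul,
    MeasureTheory.integral_add hint3 (MeasureTheory.integrable_const _),
    MeasureTheory.integral_div, MeasureTheory.integral_const_mul, hI2]
  have hle : 2 / p * ((∑ k, ‖x k‖ ^ p) * K) / K ≤ 2 / p := by
    rw [← mul_assoc, mul_div_cancel_right₀ _ hK0.ne']
    exact mul_le_of_le_one_right (by positivity) hx
  have h1 : ∫ _ : EuclideanSpace ℝ (Fin n), (1 - 2 / p) ∂P = 1 - 2 / p := by simp [hP]
  rw [h1, mul_comm (γ ^ 2) M]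
  exact mul_le_of_le_one_right (by positivity) (by linarith)
end

section
/- Fix p ∈ [1, 2]. Then for every n × n real matrix A = (a_{ij}), the maximum of ∑_{i=1}^n ∑_{j=1}^n a_{ij} ⟨x_i, x_j⟩ over all x_1, …, x_n ∈ ℝⁿ with ∑_{k=1}^n ‖x_k‖₂^p ≤ 1 equals the maximum of ∑_{i=1}^n ∑_{j=1}^n a_{ij} t_i t_j over all t ∈ ℝⁿ with ∑_{k=1}^n |t_k|^p ≤ 1. -/
lemma aux_mink {ι κ : Type*} [Fintype ι] (q : ℝ) (hq : 1 ≤ q) (s : Finset κ) (v : κ → ι → ℝ)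
    (hv : ∀ k l, 0 ≤ v k l) :
    (∑ l, (∑ k ∈ s, v k l) ^ q) ^ (1 / q) ≤ ∑ k ∈ s, (∑ l, (v k l) ^ q) ^ (1 / q) := by
  classical
  have hq0 : q ≠ 0 := by linarith
  induction s using Finset.induction_on with
  | empty =>
    have : q⁻¹ ≠ 0 := inv_ne_zero hq0
    simp [Real.zero_rpow hq0, Real.zero_rpow this]
  | insert a s ha ih =>
    simp only [Finset.sum_insert ha]
    refine (Real.Lp_add_le_of_nonneg (s := Finset.univ) (f := v a)
      (g := fun l => ∑ k ∈ s, v k l) hq (fun l _ => hv a l)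
      (fun l _ => Finset.sum_nonneg fun k _ => hv k l)).trans ?_
    gcongr

lemma aux_scalar_le_one {n : ℕ} (p : ℝ) (hp1 : 1 ≤ p) (t : Fin n → ℝ)
    (ht : (∑ k, |t k| ^ p) ≤ 1) (i : Fin n) : |t i| ≤ 1 := by
  have h : |t i| ^ p ≤ 1 := (Finset.single_le_sum (f := fun k => |t k| ^ p)
    (fun k _ => Real.rpow_nonneg (abs_nonneg _) p) (Finset.mem_univ i)).trans ht
  by_contra hc
  push Not at hc
  exact absurd h (not_le.mpr (Real.one_lt_rpow hc (by linarith)))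

lemma aux_homog {n : ℕ} (p : ℝ) (hp1 : 1 ≤ p) (A : Matrix (Fin n) (Fin n) ℝ) (M : ℝ)
    (hM : ∀ t : Fin n → ℝ, (∑ k, |t k| ^ p) ≤ 1 → ∑ i, ∑ j, A i j * t i * t j ≤ M)
    (t : Fin n → ℝ) :
    ∑ i, ∑ j, A i j * t i * t j ≤ M * (∑ k, |t k| ^ p) ^ (2 / p) := by
  have hp0 : 0 < p := by linarith
  have hnn : ∀ k ∈ Finset.univ, 0 ≤ |t k| ^ p := fun k _ => Real.rpow_nonneg (abs_nonneg _) p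
  rcases (Finset.sum_nonneg hnn).eq_or_lt with h | h
  · have h0 : ∀ k, t k = 0 := by
      intro k
      have := (Finset.sum_eq_zero_iff_of_nonneg hnn).1 h.symm k (Finset.mem_univ k)
      have := (Real.rpow_eq_zero (abs_nonneg _) hp0.ne').1 this
      simpa using this
    have h2 : 2 / p ≠ 0 := by positivity
    rw [← h, Real.zero_rpow h2]
    simp [h0]
  · set c := ∑ k, |t k| ^ p with hc
    set d := c ^ (1 / p) with hd
    have hd0 : 0 < d := Real.rpow_pos_of_pos h _
    have hdp : d ^ p = c := by
      rw [hd, ← Real.rpow_mul h.le, one_div_mul_cancel hp0.ne', Real.rpow_one]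
    have hd2 : c ^ (2 / p) = d ^ 2 := by
      rw [hd, ← Real.rpow_natCast, ← Real.rpow_mul h.le]
      congr 1
      push_cast
      ring
    have := hM (fun k => t k / d) (by
      have : ∀ k, |t k / d| ^ p = |t k| ^ p / c := by
        intro k
        rw [abs_div, abs_of_pos hd0, Real.div_rpow (abs_nonneg _) hd0.le, hdp]
      simp only [this]
      rw [← Finset.sum_div, ← hc, div_self h.ne'])
    have h3 : ∑ i, ∑ j, A i j * (t i / d) * (t j / d) = (∑ i, ∑ j, A i j * t i * t j) / d ^ 2 := by
      simp only [Finset.sum_div]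
      refine Finset.sum_congr rfl fun i _ => Finset.sum_congr rfl fun j _ => ?_
      field_simp
    rw [h3, div_le_iff₀ (by positivity)] at this
    rw [hd2]
    exact this

lemma aux_vec {n : ℕ} (p : ℝ) (hp1 : 1 ≤ p) (hp2 : p ≤ 2) (A : Matrix (Fin n) (Fin n) ℝ) (M : ℝ)
    (hM : ∀ t : Fin n → ℝ, (∑ k, |t k| ^ p) ≤ 1 → ∑ i, ∑ j, A i j * t i * t j ≤ M)
    (x : Fin n → EuclideanSpace ℝ (Fin n)) (hx : (∑ k, ‖x k‖ ^ p) ≤ 1) :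
    ∑ i, ∑ j, A i j * (inner ℝ (x i) (x j) : ℝ) ≤ M := by
  have hp0 : 0 < p := by linarith
  have hM0 : 0 ≤ M := by
    have := hM 0 (by simp [Real.zero_rpow hp0.ne'])
    simpa using this
  have h1 : ∑ i, ∑ j, A i j * (inner ℝ (x i) (x j) : ℝ)
      = ∑ l, ∑ i, ∑ j, A i j * x i l * x j l := by
    rw [Finset.sum_comm (f := fun l i => ∑ j, A i j * x i l * x j l)]
    refine Finset.sum_congr rfl fun i _ => ?_
    rw [Finset.sum_comm (f := fun l j => A i j * x i l * x j l)]
    refine Finset.sum_congr rfl fun j _ => ?_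
    rw [PiLp.inner_apply, Finset.mul_sum]
    refine Finset.sum_congr rfl fun l _ => ?_
    simp
    ring
  have hq : 1 ≤ 2 / p := by rw [le_div_iff₀ hp0]; linarith
  have h2 := aux_mink (2 / p) hq Finset.univ (fun k l => |x k l| ^ p)
    (fun k l => Real.rpow_nonneg (abs_nonneg _) p)
  have h3 : ∀ k, (∑ l, (|x k l| ^ p) ^ (2 / p)) ^ (1 / (2 / p)) = ‖x k‖ ^ p := by
    intro k
    have : ∀ l, (|x k l| ^ p) ^ (2 / p) = ‖x k l‖ ^ 2 := by
      intro l
      rw [← Real.rpow_mul (abs_nonneg _), mul_div_cancel₀ _ hp0.ne']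
      simp
    simp only [this]
    rw [← EuclideanSpace.norm_sq_eq, ← Real.rpow_natCast, ← Real.rpow_mul (norm_nonneg _)]
    congr 1
    push_cast
    field_simp
  simp only [h3] at h2
  have h4 : ∑ l, (∑ k, |x k l| ^ p) ^ (2 / p) ≤ 1 := by
    have h5 := h2.trans hx
    by_contra hc
    push Not at hc
    exact absurd h5 (not_le.mpr (Real.one_lt_rpow hc (by positivity)))
  rw [h1]
  calc _ ≤ ∑ l, M * (∑ k, |x k l| ^ p) ^ (2 / p) :=
        Finset.sum_le_sum fun l _ => aux_homog p hp1 A M hM (fun k => x k l)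
    _ = M * ∑ l, (∑ k, |x k l| ^ p) ^ (2 / p) := by rw [Finset.mul_sum]
    _ ≤ M * 1 := by gcongr
    _ = M := mul_one M

/-- For `p ∈ [1, 2]`, the vector-valued `L_p` Grothendieck maximum coincides with the
scalar one. -/
theorem lp_vector_max_eq_scalar_max {n : ℕ} (p : ℝ) (hp1 : 1 ≤ p) (hp2 : p ≤ 2)
    (A : Matrix (Fin n) (Fin n) ℝ) :
    sSup {s : ℝ | ∃ x : Fin n → EuclideanSpace ℝ (Fin n),
        (∑ k, ‖x k‖ ^ p) ≤ 1 ∧ s = ∑ i, ∑ j, A i j * (inner ℝ (x i) (x j) : ℝ)} =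
      sSup {s : ℝ | ∃ t : Fin n → ℝ, (∑ k, |t k| ^ p) ≤ 1 ∧
        s = ∑ i, ∑ j, A i j * t i * t j} := by
  have hp0 : 0 < p := by linarith
  have hb : BddAbove {s : ℝ | ∃ t : Fin n → ℝ, (∑ k, |t k| ^ p) ≤ 1 ∧
        s = ∑ i, ∑ j, A i j * t i * t j} := by
    refine ⟨∑ i, ∑ j, |A i j|, ?_⟩
    rintro s ⟨t, ht, rfl⟩
    refine Finset.sum_le_sum fun i _ => Finset.sum_le_sum fun j _ => ?_
    refine (le_abs_self _).trans ?_
    rw [abs_mul, abs_mul, mul_assoc]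
    have hi := aux_scalar_le_one p hp1 t ht i
    have hj := aux_scalar_le_one p hp1 t ht j
    exact mul_le_of_le_one_right (abs_nonneg _) (mul_le_one₀ hi (abs_nonneg _) hj)
  have hv := aux_vec p hp1 hp2 A _ (fun t ht => le_csSup hb ⟨t, ht, rfl⟩)
  apply le_antisymm
  · apply csSup_le
    · exact ⟨_, 0, by simp [Real.zero_rpow hp0.ne'], rfl⟩
    · rintro s ⟨x, hx, rfl⟩
      exact hv x hx
  · apply csSup_le
    · exact ⟨_, 0, by simp [Real.zero_rpow hp0.ne'], rfl⟩
    · rintro s ⟨t, ht, rfl⟩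
      apply le_csSup
      · refine ⟨sSup {s : ℝ | ∃ t : Fin n → ℝ, (∑ k, |t k| ^ p) ≤ 1 ∧
          s = ∑ i, ∑ j, A i j * t i * t j}, ?_⟩
        rintro s ⟨x, hx, rfl⟩
        exact hv x hx
      · rcases Nat.eq_zero_or_pos n with rfl | hn
        · exact ⟨0, by simp, by simp⟩
        · refine ⟨fun k => EuclideanSpace.single ⟨0, hn⟩ (t k), ?_, ?_⟩
          · simpa using ht
          · refine Finset.sum_congr rfl fun i _ => Finset.sum_congr rfl fun j _ => ?_
            simp [EuclideanSpace.inner_single_left, mul_assoc]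
end

section
/- Fix p, q ∈ [1, ∞) and let K > 0 be any constant for which the Grothendieck inequality holds, i.e., for every m, n, every m × n real matrix A, every d ∈ ℕ, and all unit vectors x_1,…,x_m, y_1,…,y_n ∈ ℝ^d one has ∑_{i,j} a_{ij}⟨x_i,y_j⟩ ≤ K · max over signs ε ∈ {−1,1}^m, δ ∈ {−1,1}^n of ∑_{i,j} a_{ij} ε_i δ_j. Then for every m × n real matrix A = (a_{ij}) and all vectors x_1, …, x_m, y_1, …, y_n ∈ ℝ^{m+n} satisfying ∑_{i=1}^m ‖x_i‖₂^p ≤ 1 and ∑_{j=1}^n ‖y_j‖₂^q ≤ 1, one has ∑_{i=1}^m ∑_{j=1}^n a_{ij} ⟨x_i, y_j⟩ ≤ K · max{∑_{i=1}^m ∑_{j=1}^n a_{ij} s_i t_j : s ∈ ℝ^m, t ∈ ℝⁿ, ∑_i |s_i|^p ≤ 1, ∑_j |t_j|^q ≤ 1}. -/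
theorem exists_unit_aux {d : ℕ} (hd : 0 < d) (x : EuclideanSpace ℝ (Fin d)) :
    ∃ u : EuclideanSpace ℝ (Fin d), ‖u‖ = 1 ∧ x = ‖x‖ • u := by
  by_cases h : x = 0
  · exact ⟨EuclideanSpace.single ⟨0, hd⟩ 1, by simp, by simp [h]⟩
  · have h' : ‖x‖ ≠ 0 := norm_ne_zero_iff.mpr h
    refine ⟨‖x‖⁻¹ • x, ?_, ?_⟩
    · rw [norm_smul, norm_inv, norm_norm, inv_mul_cancel₀ h']
    · rw [smul_smul, mul_inv_cancel₀ h', one_smul]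

theorem abs_le_one_aux {p : ℝ} (hp : 1 ≤ p) {m : ℕ} (s : Fin m → ℝ)
    (h : (∑ i, |s i| ^ p) ≤ 1) (i : Fin m) : |s i| ≤ 1 := by
  have h1 : |s i| ^ p ≤ 1 := le_trans
    (Finset.single_le_sum (f := fun i => |s i| ^ p)
      (fun j _ => Real.rpow_nonneg (abs_nonneg _) p) (Finset.mem_univ i)) h
  by_contra hc
  push Not at hc
  exact absurd h1 (not_le.mpr (Real.one_lt_rpow hc (by linarith)))

/-- The bilinear `L_p`/`L_q` Grothendieck inequality: any constant `K > 0` for which the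
classical Grothendieck inequality holds also works for vectors whose Euclidean norms
satisfy `ℓ_p` and `ℓ_q` constraints, with the right-hand side being the corresponding
scalar maximum (the `ℓ_p^m → ℓ_{q*}^n` operator norm of `A`). -/
theorem bilinear_lp_grothendieck (p q : ℝ) (hp : 1 ≤ p) (hq : 1 ≤ q)
    (K : ℝ) (hK : 0 < K)
    (hGro : ∀ (m n : ℕ) (A : Matrix (Fin m) (Fin n) ℝ) (d : ℕ)
      (x : Fin m → EuclideanSpace ℝ (Fin d)) (y : Fin n → EuclideanSpace ℝ (Fin d)),
      (∀ i, ‖x i‖ = 1) → (∀ j, ‖y j‖ = 1) →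
      ∑ i, ∑ j, A i j * (inner ℝ (x i) (y j) : ℝ) ≤
        K * sSup {s : ℝ | ∃ (ε : Fin m → ℝ) (δ : Fin n → ℝ),
          (∀ i, ε i = 1 ∨ ε i = -1) ∧ (∀ j, δ j = 1 ∨ δ j = -1) ∧
          s = ∑ i, ∑ j, A i j * ε i * δ j})
    (m n : ℕ) (A : Matrix (Fin m) (Fin n) ℝ)
    (x : Fin m → EuclideanSpace ℝ (Fin (m + n)))
    (y : Fin n → EuclideanSpace ℝ (Fin (m + n)))
    (hx : ∑ i, ‖x i‖ ^ p ≤ 1) (hy : ∑ j, ‖y j‖ ^ q ≤ 1) :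
    ∑ i, ∑ j, A i j * (inner ℝ (x i) (y j) : ℝ) ≤
      K * sSup {r : ℝ | ∃ (s : Fin m → ℝ) (t : Fin n → ℝ),
        (∑ i, |s i| ^ p) ≤ 1 ∧ (∑ j, |t j| ^ q) ≤ 1 ∧
        r = ∑ i, ∑ j, A i j * s i * t j} := by
  choose u hu hxu using fun i => exists_unit_aux (by have := i.2; omega) (x i)
  choose v hv hyv using fun j => exists_unit_aux (by have := j.2; omega) (y j)
  have key := hGro m n (fun i j => A i j * ‖x i‖ * ‖y j‖) (m + n) u v hu hv
  have hL : ∑ i, ∑ j, A i j * (inner ℝ (x i) (y j) : ℝ) =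
      ∑ i, ∑ j, (A i j * ‖x i‖ * ‖y j‖) * (inner ℝ (u i) (v j) : ℝ) := by
    refine Finset.sum_congr rfl fun i _ => Finset.sum_congr rfl fun j _ => ?_
    have : (inner ℝ (x i) (y j) : ℝ) = ‖x i‖ * (‖y j‖ * inner ℝ (u i) (v j)) := by
      conv_lhs => rw [hxu i, hyv j]
      rw [real_inner_smul_left, real_inner_smul_right]
    rw [this]; ring
  rw [hL]
  refine key.trans (mul_le_mul_of_nonneg_left ?_ hK.le)
  refine csSup_le_csSup ?_ ?_ ?_
  · refine ⟨∑ i, ∑ j, |A i j|, ?_⟩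
    rintro r ⟨s, t, hs, ht, rfl⟩
    refine Finset.sum_le_sum fun i _ => Finset.sum_le_sum fun j _ => ?_
    have h1 := abs_le_one_aux hp s hs i
    have h2 := abs_le_one_aux hq t ht j
    calc A i j * s i * t j ≤ |A i j * s i * t j| := le_abs_self _
      _ = |A i j| * (|s i| * |t j|) := by rw [abs_mul, abs_mul, mul_assoc]
      _ ≤ |A i j| * 1 := mul_le_mul_of_nonneg_left
          (mul_le_one₀ h1 (abs_nonneg _) h2) (abs_nonneg _)
      _ = |A i j| := mul_one _
  · exact ⟨_, fun _ => 1, fun _ => 1, fun _ => Or.inl rfl, fun _ => Or.inl rfl, rfl⟩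
  · rintro r ⟨ε, δ, hε, hδ, rfl⟩
    refine ⟨fun i => ‖x i‖ * ε i, fun j => ‖y j‖ * δ j, ?_, ?_, ?_⟩
    · refine le_trans (le_of_eq (Finset.sum_congr rfl fun i _ => ?_)) hx
      rcases hε i with h | h <;> simp [h]
    · refine le_trans (le_of_eq (Finset.sum_congr rfl fun j _ => ?_)) hy
      rcases hδ j with h | h <;> simp [h]
    · refine Finset.sum_congr rfl fun i _ => Finset.sum_congr rfl fun j _ => ?_
      ring
end

section
/- Let A = (a_{ij}) be an n × n symmetric positive semidefinite real matrix that is centered, i.e., ∑_{i=1}^n ∑_{j=1}^n a_{ij} = 0. Let v_1, …, v_k ∈ ℝ^k, let w ∈ ℝ^k and R ≥ 0 be such that ‖v_ℓ − w‖₂ ≤ R for all ℓ ∈ {1,…,k}. Then for every map σ : {1,…,n} → {1,…,k}, one has ∑_{i=1}^n ∑_{j=1}^n a_{ij} ⟨v_{σ(i)}, v_{σ(j)}⟩ ≤ R² · max over unit vectors x_1, …, x_n ∈ ℝⁿ of ∑_{i=1}^n ∑_{j=1}^n a_{ij} ⟨x_i, x_j⟩. -/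
open scoped MatrixOrder Matrix.Norms.L2Operator in
theorem psd_factor {n : ℕ} {G : Matrix (Fin n) (Fin n) ℝ} (hG : G.PosSemidef) :
    ∃ B : Matrix (Fin n) (Fin n) ℝ, G = B.conjTranspose * B :=
  CStarAlgebra.nonneg_iff_eq_star_mul_self.mp hG.nonneg

/-- The kernel clustering lower bound: for a centered symmetric positive semidefinite
matrix `A`, vectors `v₁, …, v_k` contained in a ball of radius `R` centered at `w`, and
any assignment `σ`, the clustering objective is at most `R²` times the semidefinite
relaxation (the maximum of the quadratic form over unit vectors in `ℝⁿ`). -/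
theorem kernel_clustering_le_R_sq_mul_sdp {n k : ℕ} (A : Matrix (Fin n) (Fin n) ℝ)
    (hsymm : ∀ i j, A i j = A j i)
    (hpsd : ∀ t : Fin n → ℝ, 0 ≤ ∑ i, ∑ j, A i j * t i * t j)
    (hcent : ∑ i, ∑ j, A i j = 0)
    (v : Fin k → EuclideanSpace ℝ (Fin k)) (w : EuclideanSpace ℝ (Fin k))
    (R : ℝ) (hR : 0 ≤ R) (hv : ∀ ℓ, ‖v ℓ - w‖ ≤ R) (σ : Fin n → Fin k) :
    ∑ i, ∑ j, A i j * (inner ℝ (v (σ i)) (v (σ j)) : ℝ) ≤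
      R ^ 2 * sSup {s : ℝ | ∃ x : Fin n → EuclideanSpace ℝ (Fin n),
        (∀ i, ‖x i‖ = 1) ∧ s = ∑ i, ∑ j, A i j * (inner ℝ (x i) (x j) : ℝ)} := by
  classical
  have hA : A.PosSemidef := by
    refine Matrix.PosSemidef.of_dotProduct_mulVec_nonneg ?_ ?_
    · ext i j
      simp [Matrix.conjTranspose_apply, hsymm i j]
    · intro t
      have h := hpsd t
      have e : star t ⬝ᵥ A.mulVec t = ∑ i, ∑ j, A i j * t i * t j := by
        simp only [dotProduct, Matrix.mulVec, Finset.mul_sum, star_trivial]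
        refine Finset.sum_congr rfl fun i _ => Finset.sum_congr rfl fun j _ => ?_
        ring
      rw [e]; exact h
  have hrow : ∀ i, ∑ j, A i j = 0 := by
    have h := (hA.dotProduct_mulVec_zero_iff (fun _ => (1 : ℝ))).1 (by
      simpa [dotProduct, Matrix.mulVec] using hcent)
    intro i
    simpa [dotProduct, Matrix.mulVec] using congrFun h i
  have hcol : ∀ j, ∑ i, A i j = 0 := fun j => by
    rw [← hrow j]; exact Finset.sum_congr rfl fun i _ => hsymm i j
  set y : Fin n → EuclideanSpace ℝ (Fin k) := fun i => v (σ i) - w with hy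
  have hyR : ∀ i, ‖y i‖ ≤ R := fun i => hv (σ i)
  have hLHS : ∑ i, ∑ j, A i j * (inner ℝ (v (σ i)) (v (σ j)) : ℝ)
      = ∑ i, ∑ j, A i j * (inner ℝ (y i) (y j) : ℝ) := by
    have e : ∀ i j, A i j * (inner ℝ (v (σ i)) (v (σ j)) : ℝ)
        = A i j * (inner ℝ (y i) (y j) : ℝ) + A i j * inner ℝ (v (σ i)) w
          + A i j * (inner ℝ w (v (σ j)) - inner ℝ w w) := by
      intro i j
      simp only [hy, inner_sub_left, inner_sub_right]
      ring
    simp only [e, Finset.sum_add_distrib]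
    have h1 : ∑ i, ∑ j, A i j * (inner ℝ (v (σ i)) w : ℝ) = 0 := by
      simp [← Finset.sum_mul, hrow]
    have h2 : ∑ i, ∑ j, A i j * ((inner ℝ w (v (σ j)) : ℝ) - inner ℝ w w) = 0 := by
      rw [Finset.sum_comm]
      simp [← Finset.sum_mul, hcol]
    rw [h1, h2]; ring
  rw [hLHS]
  rcases hR.eq_or_lt with h0 | hpos
  · have hy0 : ∀ i, y i = 0 := fun i => norm_le_zero_iff.1 (h0 ▸ hyR i)
    simp [hy0, ← h0]
  have hbdd : BddAbove {s : ℝ | ∃ x : Fin n → EuclideanSpace ℝ (Fin n),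
        (∀ i, ‖x i‖ = 1) ∧ s = ∑ i, ∑ j, A i j * (inner ℝ (x i) (x j) : ℝ)} := by
    refine ⟨∑ i, ∑ j, |A i j|, ?_⟩
    rintro s ⟨x, hx, rfl⟩
    refine Finset.sum_le_sum fun i _ => Finset.sum_le_sum fun j _ => ?_
    have h := abs_real_inner_le_norm (x i) (x j)
    rw [hx, hx, one_mul] at h
    calc A i j * (inner ℝ (x i) (x j) : ℝ) ≤ |A i j * (inner ℝ (x i) (x j) : ℝ)| := le_abs_self _
      _ = |A i j| * |(inner ℝ (x i) (x j) : ℝ)| := abs_mul _ _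
      _ ≤ |A i j| := mul_le_of_le_one_right (abs_nonneg _) h
  set z : Fin n → EuclideanSpace ℝ (Fin k) := fun i => R⁻¹ • y i with hz
  have hz1 : ∀ i, ‖z i‖ ≤ 1 := fun i => by
    simp only [hz, norm_smul, norm_inv, Real.norm_of_nonneg hR]
    rw [inv_mul_le_iff₀ hpos, mul_one]
    exact hyR i
  have hd : ∀ i, 0 ≤ 1 - ‖z i‖ ^ 2 := fun i => by
    have := norm_nonneg (z i)
    nlinarith [hz1 i]
  have hG : (Matrix.gram ℝ z + Matrix.diagonal fun i => 1 - ‖z i‖ ^ 2).PosSemidef :=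
    (Matrix.posSemidef_gram ℝ z).add (Matrix.PosSemidef.diagonal hd)
  obtain ⟨B, hB⟩ := psd_factor hG
  set x : Fin n → EuclideanSpace ℝ (Fin n) := fun i => WithLp.toLp 2 fun l => B l i with hx
  have hxin : ∀ i j, (inner ℝ (x i) (x j) : ℝ)
      = inner ℝ (z i) (z j) + if i = j then 1 - ‖z i‖ ^ 2 else 0 := by
    intro i j
    have h := congrFun (congrFun hB i) j
    rw [Matrix.add_apply, Matrix.gram_apply, Matrix.diagonal_apply, Matrix.mul_apply] at h
    rw [h]
    simp [hx, PiLp.inner_apply, Matrix.conjTranspose_apply, mul_comm]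
  have hxn : ∀ i, ‖x i‖ = 1 := by
    intro i
    have h := hxin i i
    rw [real_inner_self_eq_norm_sq, real_inner_self_eq_norm_sq, if_pos rfl] at h
    have := norm_nonneg (x i)
    nlinarith
  have hle := le_csSup hbdd ⟨x, hxn, rfl⟩
  have hzx : ∑ i, ∑ j, A i j * (inner ℝ (z i) (z j) : ℝ)
      ≤ ∑ i, ∑ j, A i j * (inner ℝ (x i) (x j) : ℝ) := by
    refine Finset.sum_le_sum fun i _ => Finset.sum_le_sum fun j _ => ?_
    rw [hxin, mul_add]
    split_ifs with h
    · subst h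
      have := mul_nonneg (hA.diag_nonneg (i := i)) (hd i)
      linarith
    · simp
  have hyz : ∑ i, ∑ j, A i j * (inner ℝ (y i) (y j) : ℝ)
      = R ^ 2 * ∑ i, ∑ j, A i j * (inner ℝ (z i) (z j) : ℝ) := by
    simp only [Finset.mul_sum]
    refine Finset.sum_congr rfl fun i _ => Finset.sum_congr rfl fun j _ => ?_
    simp only [hz, real_inner_smul_left, real_inner_smul_right]
    field_simp
  rw [hyz]
  exact mul_le_mul_of_nonneg_left (hzx.trans hle) (sq_nonneg R)
end

section
/- For every n ∈ ℕ, every symmetric positive semidefinite n × n real matrix A = (a_{ij}), every d ∈ ℕ, and all unit vectors x_1, …, x_n ∈ ℝ^d, one has ∑_{i=1}^n ∑_{j=1}^n a_{ij} ⟨x_i, x_j⟩ ≤ (π/n) · (Γ((n+1)/2) / Γ(n/2))² · max over signs ε_1, …, ε_n ∈ {−1, 1} of ∑_{i=1}^n ∑_{j=1}^n a_{ij} ε_i ε_j. -/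
open Real

namespace PsdGroth

open MeasureTheory

/-- A `±1`-valued sign function. -/
noncomputable def sg (t : ℝ) : ℝ := if 0 ≤ t then 1 else -1

lemma sg_cases (t : ℝ) : sg t = 1 ∨ sg t = -1 := by
  unfold sg; split_ifs <;> simp

lemma abs_sg (t : ℝ) : |sg t| = 1 := by
  rcases sg_cases t with h | h <;> simp [h]

lemma sg_mul_self (t : ℝ) : sg t * t = |t| := by
  unfold sg
  split_ifs with h
  · simp [abs_of_nonneg h]
  · simp [abs_of_neg (not_le.mp h)]

lemma measurable_sg : Measurable sg :=
  Measurable.ite measurableSet_Ici measurable_const measurable_const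

abbrev E (n : ℕ) := EuclideanSpace ℝ (Fin n)

lemma integrable_base (n : ℕ) [NeZero n] :
    Integrable (fun g : E n => ‖g‖ * exp (-‖g‖ ^ 2)) := by
  have h := (integrable_fun_norm_addHaar (E := E n) (F := ℝ) volume
    (f := fun r => r * exp (-r ^ 2)))
  refine h.mpr ?_
  have h2 := integrableOn_rpow_mul_exp_neg_mul_sq (b := 1) one_pos (s := n)
    (by have : (0:ℝ) ≤ n := Nat.cast_nonneg n
        linarith)
  refine h2.congr_fun (fun x hx => ?_) measurableSet_Ioi
  have : n - 1 + 1 = n := Nat.sub_add_cancel (NeZero.one_le)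
  simp only [finrank_euclideanSpace, Fintype.card_fin, smul_eq_mul, rpow_natCast]
  rw [← mul_assoc, ← pow_succ, this]; simp

lemma I1_eq (n : ℕ) [NeZero n] :
    ∫ g : E n, ‖g‖ * exp (-‖g‖ ^ 2) =
      √π ^ n * Gamma (((n : ℝ) + 1) / 2) / Gamma ((n : ℝ) / 2) := by
  have h := (integral_fun_norm_addHaar (E := E n) (F := ℝ) volume
    (f := fun r => r * exp (-r ^ 2)))
  rw [h]
  have hn : (0:ℝ) < n := by exact_mod_cast NeZero.pos n
  have h2 := integral_rpow_mul_exp_neg_rpow (p := 2) (q := n) two_pos (by linarith)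
  have h3 : ∫ y in Set.Ioi (0 : ℝ), y ^ (Module.finrank ℝ (E n) - 1) • (y * exp (-y ^ 2))
      = (1 / 2) * Gamma (((n : ℝ) + 1) / 2) := by
    rw [← h2]
    refine setIntegral_congr_fun measurableSet_Ioi (fun x hx => ?_)
    have : n - 1 + 1 = n := Nat.sub_add_cancel (NeZero.one_le)
    simp only [finrank_euclideanSpace, Fintype.card_fin, smul_eq_mul, rpow_natCast, rpow_two]
    rw [← mul_assoc, ← pow_succ, this]
  rw [h3, Measure.real, EuclideanSpace.volume_ball]
  have hG : 0 < Gamma ((n : ℝ) / 2) := Gamma_pos_of_pos (by positivity)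
  have hG1 : Gamma ((n : ℝ) / 2 + 1) = n / 2 * Gamma ((n : ℝ) / 2) :=
    Gamma_add_one (by positivity)
  simp only [finrank_euclideanSpace, Fintype.card_fin, smul_eq_mul, nsmul_eq_mul,
    ENNReal.ofReal_one, one_pow, one_mul, hG1]
  rw [ENNReal.toReal_ofReal (by positivity)]
  field_simp

lemma abs_1d : ∫ t : ℝ, |t| * exp (-t ^ 2) = 1 := by
  have h := integral_comp_abs (f := fun t => t * exp (-t ^ 2))
  simp only [sq_abs] at h
  rw [h]
  have h2 := integral_rpow_mul_exp_neg_rpow (p := 2) (q := 1) two_pos (by norm_num)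
  simp only [rpow_one, rpow_two] at h2
  rw [h2]; norm_num

lemma J_eq (n : ℕ) (i : Fin n) :
    ∫ g : E n, |g i| * exp (-‖g‖ ^ 2) = √π ^ (n - 1) := by
  rw [← (PiLp.volume_preserving_toLp (Fin n)).integral_comp
    (MeasurableEquiv.toLp 2 (Fin n → ℝ)).measurableEmbedding]
  have h : ∀ v : Fin n → ℝ, |(WithLp.toLp 2 v : E n) i| * exp (-‖(WithLp.toLp 2 v : E n)‖ ^ 2)
      = ∏ j, (if j = i then |v j| else 1) * exp (-(v j) ^ 2) := by
    intro v
    rw [Finset.prod_mul_distrib, Finset.prod_ite_eq' Finset.univ i, ← exp_sum,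
      EuclideanSpace.norm_sq_eq]
    simp
  simp_rw [h]
  rw [integral_fintype_prod_volume_eq_prod
    (f := fun (j : Fin n) (t : ℝ) => (if j = i then |t| else 1) * exp (-t ^ 2))]
  rw [← Finset.mul_prod_erase Finset.univ _ (Finset.mem_univ i)]
  have h1 := integral_gaussian 1
  simp only [neg_mul, one_mul, div_one] at h1
  rw [Finset.prod_congr rfl (g := fun _ => √π)]
  · simp [abs_1d]
  · intro j hj
    simp [Finset.ne_of_mem_erase hj, h1]

lemma invariant (n : ℕ) (R : E n ≃ₗᵢ[ℝ] E n) (F : E n → ℝ) :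
    ∫ g, F (R g) = ∫ g, F g :=
  R.measurePreserving.integral_comp R.toMeasurableEquiv.measurableEmbedding F

/-- Rotation invariance lemma. -/
lemma rot (n : ℕ) (φ ψ : ℝ → ℝ)
    (hint : ∀ x y : E n, Integrable
      (fun g : E n => φ (inner ℝ x g) * inner ℝ y g * ψ ‖g‖))
    (x y e : E n) (hx : ‖x‖ = 1) (he : ‖e‖ = 1) :
    ∫ g : E n, φ (inner ℝ x g) * inner ℝ y g * ψ ‖g‖ =
      inner ℝ x y * ∫ g : E n, φ (inner ℝ e g) * inner ℝ e g * ψ ‖g‖ := by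
  set z := y - (inner ℝ x y : ℝ) • x with hz
  have hxz : inner ℝ x z = 0 := by
    rw [hz, inner_sub_right, inner_smul_right, real_inner_self_eq_norm_sq, hx]; ring
  have hsplit : ∀ g : E n, φ (inner ℝ x g) * inner ℝ y g * ψ ‖g‖ =
      inner ℝ x y * (φ (inner ℝ x g) * inner ℝ x g * ψ ‖g‖) +
        φ (inner ℝ x g) * inner ℝ z g * ψ ‖g‖ := by
    intro g
    rw [hz, inner_sub_left, real_inner_smul_left]; ring
  simp_rw [hsplit]
  rw [integral_add ((hint x x).const_mul _) (hint x z), integral_const_mul]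
  have hzero : ∫ g : E n, φ (inner ℝ x g) * inner ℝ z g * ψ ‖g‖ = 0 := by
    let R := (Submodule.span ℝ {z})ᗮ.reflection
    have h := invariant n R (fun g => φ (inner ℝ x g) * inner ℝ z g * ψ ‖g‖)
    have hRz : R z = -z := Submodule.reflection_orthogonalComplement_singleton_eq_neg z
    have hRx : R x = x := by
      apply Submodule.reflection_mem_subspace_eq_self
      rw [Submodule.mem_orthogonal_singleton_iff_inner_right, real_inner_comm, hxz]
    have e1 : ∀ g, inner ℝ x (R g) = inner ℝ x g := fun g => by
      rw [← R.inner_map_map x g, hRx]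
    have e2 : ∀ g, inner ℝ z (R g) = - inner ℝ z g := fun g => by
      rw [← R.inner_map_map z g, hRz, inner_neg_left, neg_neg]
    simp only [e1, e2, R.norm_map, mul_neg, neg_mul, integral_neg] at h
    linarith
  rw [hzero, add_zero]
  congr 1
  let R := (Submodule.span ℝ {x - e})ᗮ.reflection
  have hR : R x = e := Submodule.reflection_sub (by rw [hx, he])
  have h := invariant n R (fun g => φ (inner ℝ e g) * inner ℝ e g * ψ ‖g‖)
  have e1 : ∀ g, inner ℝ e (R g) = inner ℝ x g := fun g => by
    rw [← R.inner_map_map x g, hR]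
  simp only [e1, R.norm_map] at h
  exact h

lemma int_a (n : ℕ) [NeZero n] (x y : E n) : Integrable
    (fun g : E n => sg (inner ℝ x g) * inner ℝ y g * exp (-‖g‖ ^ 2)) := by
  refine ((integrable_base n).const_mul ‖y‖).mono' ?_ (ae_of_all _ fun g => ?_)
  · have := measurable_sg
    exact Measurable.aestronglyMeasurable (by fun_prop)
  · rw [norm_mul, norm_mul, norm_eq_abs, abs_sg, one_mul, norm_eq_abs (exp _), abs_exp,
      ← mul_assoc]
    gcongr
    exact norm_inner_le_norm y g

lemma int_b (n : ℕ) [NeZero n] (x y : E n) : Integrable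
    (fun g : E n => id (inner ℝ x g) * inner ℝ y g * (exp (-‖g‖ ^ 2) / ‖g‖)) := by
  refine ((integrable_base n).const_mul (‖x‖ * ‖y‖)).mono' ?_ (ae_of_all _ fun g => ?_)
  · exact Measurable.aestronglyMeasurable (by simp only [id]; fun_prop)
  · rw [norm_mul, norm_mul, norm_div, norm_norm, norm_eq_abs (exp _), abs_exp]
    calc ‖id (inner ℝ x g : ℝ)‖ * ‖(inner ℝ y g : ℝ)‖ * (exp (-‖g‖ ^ 2) / ‖g‖)
        ≤ (‖x‖ * ‖g‖) * (‖y‖ * ‖g‖) * (exp (-‖g‖ ^ 2) / ‖g‖) := by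
          gcongr
          · exact norm_inner_le_norm x g
          · exact norm_inner_le_norm y g
      _ = ‖x‖ * ‖y‖ * (‖g‖ * exp (-‖g‖ ^ 2)) := by
          rcases eq_or_ne ‖g‖ 0 with h | h
          · simp [h]
          · field_simp

lemma inner_single (n : ℕ) (i : Fin n) (g : E n) :
    inner ℝ (EuclideanSpace.single i (1:ℝ) : E n) g = g i := by
  rw [EuclideanSpace.inner_single_left]; simp

lemma val_a (n : ℕ) [NeZero n] (x y : E n) (hx : ‖x‖ = 1) :
    ∫ g : E n, sg (inner ℝ x g) * inner ℝ y g * exp (-‖g‖ ^ 2) =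
      √π ^ (n - 1) * inner ℝ x y := by
  rw [rot n sg (fun r => exp (-r ^ 2)) (int_a n) x y (EuclideanSpace.single 0 1) hx (by simp),
    ← J_eq n 0, mul_comm]
  simp only [sg_mul_self, inner_single]

lemma val_b (n : ℕ) [NeZero n] (x y : E n) (hx : ‖x‖ = 1) :
    ∫ g : E n, inner ℝ x g * inner ℝ y g * (exp (-‖g‖ ^ 2) / ‖g‖) =
      (∫ g : E n, ‖g‖ * exp (-‖g‖ ^ 2)) / n * inner ℝ x y := by
  have key := fun i : Fin n => rot n id (fun r => exp (-r ^ 2) / r) (int_b n) x y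
    (EuclideanSpace.single i 1) hx (by simp)
  have hn : (n : ℝ) ≠ 0 := NeZero.ne _
  have hs := Finset.sum_congr rfl (fun i (_ : i ∈ (Finset.univ : Finset (Fin n))) => key i)
  rw [← Finset.mul_sum, ← integral_finsetSum Finset.univ
    (f := fun i (g : E n) => id (inner ℝ (EuclideanSpace.single i (1:ℝ)) g : ℝ) *
      inner ℝ (EuclideanSpace.single i (1:ℝ)) g * (exp (-‖g‖ ^ 2) / ‖g‖))
    (fun i _ => int_b n _ _)] at hs
  have : ∀ g : E n, ∑ i, id (inner ℝ (EuclideanSpace.single i (1:ℝ)) g : ℝ) *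
      inner ℝ (EuclideanSpace.single i (1:ℝ)) g * (exp (-‖g‖ ^ 2) / ‖g‖) =
      ‖g‖ * exp (-‖g‖ ^ 2) := by
    intro g
    rw [← Finset.sum_mul]
    have : ∑ i, id (inner ℝ (EuclideanSpace.single i (1:ℝ)) g : ℝ) *
      inner ℝ (EuclideanSpace.single i (1:ℝ)) g = ‖g‖ ^ 2 := by
      rw [EuclideanSpace.norm_sq_eq]
      simp only [inner_single, id]
      simp [sq]
    rw [this]
    rcases eq_or_ne ‖g‖ 0 with h | h
    · simp [h]
    · field_simp
  simp_rw [this] at hs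
  simp only [id, Finset.sum_const, Finset.card_univ, Fintype.card_fin, nsmul_eq_mul] at hs
  rw [div_mul_eq_mul_div, eq_div_iff hn]
  linarith

/-- Realize the Gram matrix of `n` vectors inside `ℝⁿ`. -/
lemma exists_gram (n d : ℕ) (x : Fin n → E d) :
    ∃ y : Fin n → E n, ∀ i j, inner ℝ (y i) (y j) = (inner ℝ (x i) (x j) : ℝ) := by
  open scoped MatrixOrder Matrix.Norms.L2Operator in
  obtain ⟨B, hB⟩ := CStarAlgebra.nonneg_iff_eq_star_mul_self.mp
    (Matrix.posSemidef_gram ℝ x).nonneg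
  refine ⟨fun i => WithLp.toLp 2 (fun k => B k i), fun i j => ?_⟩
  have := congrFun (congrFun hB i) j
  rw [Matrix.gram_apply] at this
  rw [this]
  simp [Matrix.mul_apply, PiLp.inner_apply, Matrix.star_eq_conjTranspose, mul_comm]

lemma main_pos (n : ℕ) [NeZero n] (A : Matrix (Fin n) (Fin n) ℝ)
    (hsymm : ∀ i j, A i j = A j i)
    (hpsd : ∀ t : Fin n → ℝ, 0 ≤ ∑ i, ∑ j, A i j * t i * t j)
    (x : Fin n → E n) (hx : ∀ i, ‖x i‖ = 1) (M : ℝ)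
    (hM : ∀ ε : Fin n → ℝ, (∀ i, ε i = 1 ∨ ε i = -1) → ∑ i, ∑ j, A i j * ε i * ε j ≤ M) :
    ∑ i, ∑ j, A i j * (inner ℝ (x i) (x j) : ℝ) ≤
      (π / n) * (Gamma (((n : ℝ) + 1) / 2) / Gamma ((n : ℝ) / 2)) ^ 2 * M := by
  set S := ∑ i, ∑ j, A i j * (inner ℝ (x i) (x j) : ℝ) with hS
  set I := ∫ g : E n, ‖g‖ * exp (-‖g‖ ^ 2) with hI
  set J := √π ^ (n - 1) with hJ
  have hn : (0 : ℝ) < n := by exact_mod_cast NeZero.pos n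
  have hG : 0 < Gamma ((n : ℝ) / 2) := Gamma_pos_of_pos (by positivity)
  have hG1 : 0 < Gamma (((n : ℝ) + 1) / 2) := Gamma_pos_of_pos (by positivity)
  have hIJ : I = J * √π * (Gamma (((n : ℝ) + 1) / 2) / Gamma ((n : ℝ) / 2)) := by
    rw [hI, I1_eq, hJ, ← pow_succ, Nat.sub_add_cancel NeZero.one_le]; ring
  have hJ0 : 0 < J := by positivity
  have hI0 : 0 < I := by rw [hIJ]; positivity
  -- the key integrated inequality
  have key : ∀ c : ℝ, 2 * c * (J * S) - c ^ 2 * (I / n * S) ≤ M * I := by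
    intro c
    have hpt : ∀ g : E n,
        ∑ i, ∑ j, (2 * c * (A i j * (sg (inner ℝ (x i) g) * inner ℝ (x j) g * exp (-‖g‖ ^ 2)))
          - c ^ 2 * (A i j * (inner ℝ (x i) g * inner ℝ (x j) g * (exp (-‖g‖ ^ 2) / ‖g‖))))
        ≤ M * (‖g‖ * exp (-‖g‖ ^ 2)) := by
      intro g
      rcases eq_or_ne ‖g‖ 0 with h0 | h0
      · have : g = 0 := norm_eq_zero.mp h0
        simp [this]
      set s : Fin n → ℝ := fun i => sg (inner ℝ (x i) g) with hs
      set l : Fin n → ℝ := fun i => c * inner ℝ (x i) g / ‖g‖ with hl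
      have h1 := hpsd (fun i => s i - l i)
      have h2 := hM s (fun i => sg_cases _)
      have h3 : ∑ i, ∑ j, A i j * l i * s j = ∑ i, ∑ j, A i j * s i * l j := by
        rw [Finset.sum_comm]
        refine Finset.sum_congr rfl fun i _ => Finset.sum_congr rfl fun j _ => ?_
        rw [hsymm j i]; ring
      have h4 : ∑ i, ∑ j, A i j * (s i - l i) * (s j - l j) =
          ∑ i, ∑ j, A i j * s i * s j - ∑ i, ∑ j, A i j * s i * l j
          - ∑ i, ∑ j, A i j * l i * s j + ∑ i, ∑ j, A i j * l i * l j := by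
        simp only [← Finset.sum_sub_distrib, ← Finset.sum_add_distrib]
        refine Finset.sum_congr rfl fun i _ => Finset.sum_congr rfl fun j _ => ?_
        ring
      have h5 : 2 * ∑ i, ∑ j, A i j * s i * l j - ∑ i, ∑ j, A i j * l i * l j ≤ M := by
        linarith
      have h6 := mul_le_mul_of_nonneg_right h5
        (by positivity : 0 ≤ ‖g‖ * exp (-‖g‖ ^ 2))
      refine le_of_eq_of_le ?_ h6
      simp only [Finset.mul_sum, ← Finset.sum_sub_distrib, Finset.sum_mul]
      refine Finset.sum_congr rfl fun i _ => Finset.sum_congr rfl fun j _ => ?_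
      simp only [hs, hl]
      field_simp
    have hia := fun i j => (((int_a n (x i) (x j)).const_mul (A i j)).const_mul (2 * c))
    have hib := fun i j => (((int_b n (x i) (x j)).const_mul (A i j)).const_mul (c ^ 2))
    simp only [id] at hib
    have hle := integral_mono
      (integrable_finsetSum _ fun i _ => integrable_finsetSum _ fun j _ =>
        (hia i j).sub (hib i j))
      ((integrable_base n).const_mul M) hpt
    rw [integral_const_mul] at hle
    refine le_of_eq_of_le ?_ hle
    rw [integral_finsetSum _ fun i _ => integrable_finsetSum _ fun j _ =>
        (hia i j).sub (hib i j)]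
    simp only [hS, Finset.mul_sum, ← Finset.sum_sub_distrib]
    refine Finset.sum_congr rfl fun i _ => ?_
    rw [integral_finsetSum _ fun j _ => (hia i j).sub (hib i j)]
    refine Finset.sum_congr rfl fun j _ => ?_
    rw [integral_sub' (hia i j) (hib i j)]
    simp only [integral_const_mul, val_a n _ _ (hx i), val_b n _ _ (hx i)]
    ring
  have h := key (n * J / I)
  have h1 : 2 * (n * J / I) * (J * S) - (n * J / I) ^ 2 * (I / n * S) = n * J ^ 2 / I * S := by
    field_simp; ring
  rw [h1] at h
  have hconst : (π / n) * (Gamma (((n : ℝ) + 1) / 2) / Gamma ((n : ℝ) / 2)) ^ 2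
      = I / (n * J ^ 2 / I) := by
    have : (Gamma (((n : ℝ) + 1) / 2) / Gamma ((n : ℝ) / 2)) = I / (J * √π) := by
      rw [hIJ]; field_simp
    rw [this]
    have hp : √π ^ 2 = π := sq_sqrt pi_pos.le
    field_simp
    rw [hp]
  rw [hconst, div_mul_eq_mul_div, le_div_iff₀ (by positivity)]
  linarith

end PsdGroth

/-- The dimension-improved positive semidefinite Grothendieck inequality: for every
symmetric positive semidefinite `n × n` real matrix `A` and all unit vectors
`x₁, …, xₙ ∈ ℝ^d`, the vector quadratic form is at most
`(π/n)(Γ((n+1)/2)/Γ(n/2))²` times the maximum over signs of the quadratic form. -/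
theorem psd_grothendieck_inequality_dimension_improvement {n : ℕ}
    (A : Matrix (Fin n) (Fin n) ℝ)
    (hsymm : ∀ i j, A i j = A j i)
    (hpsd : ∀ t : Fin n → ℝ, 0 ≤ ∑ i, ∑ j, A i j * t i * t j)
    (d : ℕ) (x : Fin n → EuclideanSpace ℝ (Fin d)) (hx : ∀ i, ‖x i‖ = 1) :
    ∑ i, ∑ j, A i j * (inner ℝ (x i) (x j) : ℝ) ≤
      (π / n) * (Real.Gamma (((n : ℝ) + 1) / 2) / Real.Gamma ((n : ℝ) / 2)) ^ 2 *
        sSup {s : ℝ | ∃ ε : Fin n → ℝ, (∀ i, ε i = 1 ∨ ε i = -1) ∧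
          s = ∑ i, ∑ j, A i j * ε i * ε j} := by
  rcases Nat.eq_zero_or_pos n with hn | hn
  · subst hn
    simp
  haveI : NeZero n := ⟨hn.ne'⟩
  obtain ⟨y, hy⟩ := PsdGroth.exists_gram n d x
  simp_rw [← hy]
  refine PsdGroth.main_pos n A hsymm hpsd y (fun i => ?_) _ (fun ε hε => ?_)
  · have h := hy i i
    rw [real_inner_self_eq_norm_sq, real_inner_self_eq_norm_sq, hx i] at h
    nlinarith [norm_nonneg (y i)]
  · refine le_csSup ⟨∑ i, ∑ j, |A i j|, ?_⟩ ⟨ε, hε, rfl⟩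
    rintro s ⟨δ, hδ, rfl⟩
    refine Finset.sum_le_sum fun i _ => Finset.sum_le_sum fun j _ => ?_
    refine (le_abs_self _).trans ?_
    rw [abs_mul, abs_mul]
    rcases hδ i with h | h <;> rcases hδ j with h' | h' <;> simp [h, h']
end
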